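/- arXiv:1606.05306 — 2 statements merged into one kernel-verified Lean document; each statement's English description precedes it below -/
import Mathlib

section
/- Let μ* = Σ_{i=1}^M c_i δ_{x_i} with nonzero real coefficients c_i and pairwise distinct points C = {x_1,…,x_M} ⊂ SO(3), and let N ∈ ℕ. Assume that for every sign vector (u_i)_{i=1}^M ∈ {−1,1}^M there exists a function q ∈ Π_N (a dual certificate) such that q(x_i) = u_i for all x_i ∈ C and |q(x)| < 1 for all x ∈ SO(3) \ C. Then μ* is the unique solution of the minimization problem: minimize ‖μ‖_TV over all finite signed Borel measures μ on SO(3) subject to ⟨μ, D^l_{k,m}⟩ = ⟨μ*, D^l_{k,m}⟩ for all 0 ≤ l ≤ N and all −l ≤ k,m ≤ l. -/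
noncomputable section

open MeasureTheory
open scoped ENNReal

abbrev Mat3 := Matrix (Fin 3) (Fin 3) ℝ

/-- membership in SO(3) -/
def IsSO3 (x : Mat3) : Prop := x.transpose * x = 1 ∧ x.det = 1

/-- the rotation group SO(3) -/
def SO3 : Type := {x : Mat3 // IsSO3 x}

instance : TopologicalSpace SO3 := instTopologicalSpaceSubtype
instance : MeasurableSpace SO3 := borel SO3

/-- coercion to matrices -/
instance : CoeHead SO3 Mat3 := ⟨Subtype.val⟩

/-- rotation angle -/
def rotAngle (x : Mat3) : ℝ := Real.arccos ((Matrix.trace x - 1) / 2)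

/-- rotation about the z-axis -/
def Rz (t : ℝ) : Mat3 :=
  !![Real.cos t, -Real.sin t, 0; Real.sin t, Real.cos t, 0; 0, 0, 1]

/-- rotation about the x-axis -/
def Rx (t : ℝ) : Mat3 :=
  !![1, 0, 0; 0, Real.cos t, -Real.sin t; 0, Real.sin t, Real.cos t]

/-- the normalizing constant C_{l,k,m} of the Wigner function P^l_{k,m} -/
def wignerC (l : ℕ) (k m : ℤ) : ℂ :=
  ((-1 : ℂ) ^ ((l : ℤ) - k) * Complex.I ^ (m - k) /
      (2 ^ l * ((((l : ℤ) - k).toNat.factorial : ℝ) : ℂ))) *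
    (Real.sqrt
      (((((l : ℤ) - k).toNat.factorial : ℝ) * ((((l : ℤ) + m).toNat.factorial : ℝ))) /
        ((((l : ℤ) + k).toNat.factorial : ℝ) * ((((l : ℤ) - m).toNat.factorial : ℝ)))) : ℝ)

/-- the function P^l_{k,m} -/
def wignerP (l : ℕ) (k m : ℤ) (t : ℝ) : ℂ :=
  wignerC l k m * ((1 - t : ℂ) ^ (-(((m - k : ℤ) : ℂ)) / 2)) *
    ((1 + t : ℂ) ^ (-(((m + k : ℤ) : ℂ)) / 2)) *
    ((iteratedDeriv ((l : ℤ) - m).toNat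
        (fun u : ℝ => (1 - u) ^ ((l : ℤ) - k).toNat * (1 + u) ^ ((l : ℤ) + k).toNat) t : ℝ) : ℂ)

/-- the Wigner D-function in Euler angles -/
def wignerDFormula (l : ℕ) (k m : ℤ) (α β γ : ℝ) : ℂ :=
  Complex.exp (-(k : ℂ) * α * Complex.I) * wignerP l k m (Real.cos β) *
    Complex.exp (-(m : ℂ) * γ * Complex.I)

/-- `D` is the family of Wigner D-functions (on matrices) -/
def IsWignerFamily (D : ℕ → ℤ → ℤ → Mat3 → ℂ) : Prop :=
  ∀ (l : ℕ) (k m : ℤ), -(l : ℤ) ≤ k → k ≤ l → -(l : ℤ) ≤ m → m ≤ l →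
    ∀ α β γ : ℝ, 0 ≤ β → β ≤ Real.pi →
      D l k m (Rz α * Rx β * Rz γ) = wignerDFormula l k m α β γ

/-- the Dirac measure at `x` as a signed measure -/
def diracSM (x : SO3) : SignedMeasure SO3 := (Measure.dirac x).toSignedMeasure

/-- pairing of a signed measure with a complex-valued function, ⟨μ, f⟩ = ∫ f dμ -/
def pairSM (μ : SignedMeasure SO3) (f : SO3 → ℂ) : ℂ :=
  (∫ a, f a ∂μ.toJordanDecomposition.posPart) - ∫ a, f a ∂μ.toJordanDecomposition.negPart

/-- total variation norm ‖μ‖_TV = |μ|(SO(3)) -/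
def tvNorm (μ : SignedMeasure SO3) : ℝ≥0∞ := μ.totalVariation Set.univ

end

noncomputable section

open MeasureTheory
open scoped ENNReal

section Euler

lemma isSO3_adjugate {x : Mat3} (h : IsSO3 x) : x.adjugate = x.transpose := by
  calc x.adjugate = (x.transpose * x) * x.adjugate := by rw [h.1, one_mul]
    _ = x.transpose := by rw [mul_assoc, Matrix.mul_adjugate, h.2, one_smul, mul_one]

/-- The first Euler angle of a rotation matrix. -/
def eulerAlpha (x : Mat3) : ℝ :=
  if 1 - x 2 2 ^ 2 = 0 then Complex.arg ⟨x 0 0, x 1 0⟩ else Complex.arg ⟨-x 1 2, x 0 2⟩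

/-- The second Euler angle of a rotation matrix. -/
def eulerBeta (x : Mat3) : ℝ := Real.arccos (x 2 2)

/-- The third Euler angle of a rotation matrix. -/
def eulerGamma (x : Mat3) : ℝ :=
  if 1 - x 2 2 ^ 2 = 0 then 0 else Complex.arg ⟨x 2 1, x 2 0⟩

lemma cos_sin_arg_of_sq_add_sq {a b s : ℝ} (hs : 0 < s) (h : a ^ 2 + b ^ 2 = s ^ 2) :
    Real.cos (Complex.arg ⟨a, b⟩) = a / s ∧ Real.sin (Complex.arg ⟨a, b⟩) = b / s := by
  have hn : ‖(⟨a, b⟩ : ℂ)‖ = s := by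
    rw [Complex.norm_def, Complex.normSq_mk, ← Real.sqrt_sq hs.le, ← h]
    congr 1
    ring
  have h0 : (⟨a, b⟩ : ℂ) ≠ 0 := by
    rw [← norm_pos_iff, hn]
    exact hs
  exact ⟨by rw [Complex.cos_arg h0, hn], by rw [Complex.sin_arg, hn]⟩

lemma Rz_mul_Rx_mul_Rz (α β γ : ℝ) : Rz α * Rx β * Rz γ =
    !![Real.cos α * Real.cos γ - Real.sin α * Real.cos β * Real.sin γ,
        -(Real.cos α * Real.sin γ) - Real.sin α * Real.cos β * Real.cos γ,
        Real.sin α * Real.sin β;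
      Real.sin α * Real.cos γ + Real.cos α * Real.cos β * Real.sin γ,
        -(Real.sin α * Real.sin γ) + Real.cos α * Real.cos β * Real.cos γ,
        -(Real.cos α * Real.sin β);
      Real.sin β * Real.sin γ, Real.sin β * Real.cos γ, Real.cos β] := by
  ext i j
  fin_cases i <;> fin_cases j <;> simp [Rz, Rx, Matrix.mul_apply, Fin.sum_univ_three] <;> ring

/-- Every rotation matrix is the product of elementary rotations by its Euler angles. -/
lemma isSO3_eq_euler {x : Mat3} (h : IsSO3 x) :
    Rz (eulerAlpha x) * Rx (eulerBeta x) * Rz (eulerGamma x) = x := by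
  have hadj := isSO3_adjugate h
  rw [Matrix.adjugate_fin_three] at hadj
  have hrow : x * x.transpose = 1 := mul_eq_one_comm.mp h.1
  have c00 := congrFun (congrFun hadj 0) 0
  have c01 := congrFun (congrFun hadj 0) 1
  have c10 := congrFun (congrFun hadj 1) 0
  have c11 := congrFun (congrFun hadj 1) 1
  have col22 := congrFun (congrFun h.1 2) 2
  have col00 := congrFun (congrFun h.1 0) 0
  have row22 := congrFun (congrFun hrow 2) 2
  simp [Matrix.mul_apply, Fin.sum_univ_three] at c00 c01 c10 c11 col22 col00 row22
  have hle : x 2 2 ^ 2 ≤ 1 := by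
    linarith [mul_self_nonneg (x 0 2), mul_self_nonneg (x 1 2), sq (x 2 2)]
  have habs := abs_le.mp ((sq_le_one_iff_abs_le_one _).mp hle)
  have hcosβ : Real.cos (eulerBeta x) = x 2 2 := Real.cos_arccos habs.1 habs.2
  have hsinβ : Real.sin (eulerBeta x) = √(1 - x 2 2 ^ 2) := Real.sin_arccos _
  rw [Rz_mul_Rx_mul_Rz, hcosβ, hsinβ]
  refine Eq.trans ?_ (Matrix.eta_fin_three x).symm
  by_cases h0 : 1 - x 2 2 ^ 2 = 0
  · have e02 : x 0 2 = 0 := mul_self_eq_zero.mp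
      (by linarith [mul_self_nonneg (x 0 2), mul_self_nonneg (x 1 2), sq (x 2 2)])
    have e12 : x 1 2 = 0 := mul_self_eq_zero.mp
      (by linarith [mul_self_nonneg (x 0 2), mul_self_nonneg (x 1 2), sq (x 2 2)])
    have e20 : x 2 0 = 0 := mul_self_eq_zero.mp
      (by linarith [mul_self_nonneg (x 2 0), mul_self_nonneg (x 2 1), sq (x 2 2)])
    have e21 : x 2 1 = 0 := mul_self_eq_zero.mp
      (by linarith [mul_self_nonneg (x 2 0), mul_self_nonneg (x 2 1), sq (x 2 2)])
    obtain ⟨hc, hs⟩ := cos_sin_arg_of_sq_add_sq (a := x 0 0) (b := x 1 0) one_pos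
      (by rw [e20] at col00; linarith)
    rw [show eulerAlpha x = Complex.arg ⟨x 0 0, x 1 0⟩ from if_pos h0,
      show eulerGamma x = 0 from if_pos h0, hc, hs, h0, Real.sqrt_zero, Real.cos_zero,
      Real.sin_zero, e02, e12, e20, e21]
    have e01 : x 0 1 = -(x 1 0 * x 2 2) := by rw [e12] at c10; linarith
    have e11 : x 1 1 = x 0 0 * x 2 2 := by rw [e02] at c11; linarith
    rw [e01, e11]
    simp
  · have hpos : 0 < 1 - x 2 2 ^ 2 := lt_of_le_of_ne (by linarith) (Ne.symm h0)
    set s := √(1 - x 2 2 ^ 2)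
    have hs0 : 0 < s := Real.sqrt_pos.mpr hpos
    have hs2 : s ^ 2 = 1 - x 2 2 ^ 2 := Real.sq_sqrt hpos.le
    obtain ⟨hcα, hsα⟩ := cos_sin_arg_of_sq_add_sq (a := -x 1 2) (b := x 0 2) hs0
      (by rw [hs2]; linarith)
    obtain ⟨hcγ, hsγ⟩ := cos_sin_arg_of_sq_add_sq (a := x 2 1) (b := x 2 0) hs0
      (by rw [hs2]; linarith)
    rw [show eulerAlpha x = Complex.arg ⟨-x 1 2, x 0 2⟩ from if_neg h0,
      show eulerGamma x = Complex.arg ⟨x 2 1, x 2 0⟩ from if_neg h0, hcα, hsα, hcγ, hsγ]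
    have hsne := hs0.ne'
    have e00 : -x 1 2 / s * (x 2 1 / s) - x 0 2 / s * x 2 2 * (x 2 0 / s) = x 0 0 := by
      field_simp
      rw [hs2]
      linear_combination c00 + x 2 2 * c11
    have e01 : -(-x 1 2 / s * (x 2 0 / s)) - x 0 2 / s * x 2 2 * (x 2 1 / s) = x 0 1 := by
      field_simp
      rw [hs2]
      linear_combination c10 - x 2 2 * c01
    have e10 : x 0 2 / s * (x 2 1 / s) + -x 1 2 / s * x 2 2 * (x 2 0 / s) = x 1 0 := by
      field_simp
      rw [hs2]
      linear_combination c01 - x 2 2 * c10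
    have e11 : -(x 0 2 / s * (x 2 0 / s)) + -x 1 2 / s * x 2 2 * (x 2 1 / s) = x 1 1 := by
      field_simp
      rw [hs2]
      linear_combination c11 + x 2 2 * c00
    rw [e00, e01, e10, e11, div_mul_cancel₀ _ hsne, div_mul_cancel₀ _ hsne,
      mul_div_cancel₀ _ hsne, mul_div_cancel₀ _ hsne, neg_neg]

end Euler

section WignerBound

open Polynomial in
lemma iteratedDeriv_polynomial_eval (p : ℝ[X]) (n : ℕ) :
    iteratedDeriv n (fun t => p.eval t) = fun t => (derivative^[n] p).eval t := by
  induction n with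
  | zero => simp
  | succ n ih =>
    rw [iteratedDeriv_succ, ih, Function.iterate_succ_apply']
    ext t
    exact Polynomial.deriv _

open Polynomial in
/-- The iterated derivative in the Rodrigues formula, as a polynomial with explicit zeros. -/
lemma exists_iteratedDeriv_eq_mul (a b n : ℕ) : ∃ r : ℝ[X],
    iteratedDeriv n (fun u : ℝ => (1 - u) ^ a * (1 + u) ^ b) =
      fun t => (1 - t) ^ (a - n) * (1 + t) ^ (b - n) * r.eval t := by
  have hcop : IsCoprime (1 - X : ℝ[X]) (1 + X) := by
    refine ⟨C (1 / 2), C (1 / 2), ?_⟩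
    rw [← mul_add, show (1 - X + (1 + X) : ℝ[X]) = C 2 by rw [map_ofNat]; ring, ← C_mul]
    norm_num
  obtain ⟨r, hr⟩ := (hcop.pow (m := a - n) (n := b - n)).mul_dvd
    (pow_sub_dvd_iterate_derivative_of_pow_dvd n
      (Dvd.intro ((1 + X : ℝ[X]) ^ b) (rfl : (1 - X : ℝ[X]) ^ a * (1 + X) ^ b = _)))
    (pow_sub_dvd_iterate_derivative_of_pow_dvd n (Dvd.intro_left ((1 - X : ℝ[X]) ^ a) rfl))
  refine ⟨r, ?_⟩
  have := iteratedDeriv_polynomial_eval ((1 - X) ^ a * (1 + X) ^ b) n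
  rw [hr] at this
  simpa using this

lemma norm_cpow_mul_pow_toNat_le (s : ℤ) {y : ℝ} (hy0 : 0 ≤ y) (hy2 : y ≤ 2) :
    ‖(y : ℂ) ^ (-(s : ℂ) / 2)‖ * y ^ s.toNat ≤ 2 ^ (-(s : ℝ) / 2 + s.toNat) := by
  have hre : (-(s : ℂ) / 2).re = -(s : ℝ) / 2 := by simp
  have hs : (s : ℝ) ≤ s.toNat := by exact_mod_cast Int.self_le_toNat s
  have hexp : 0 ≤ -(s : ℝ) / 2 + s.toNat := by
    have : (0 : ℝ) ≤ s.toNat := Nat.cast_nonneg _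
    linarith
  rcases hy0.eq_or_lt with rfl | hy
  · rcases eq_or_ne s 0 with rfl | h0
    · simp
    · rw [Complex.ofReal_zero, Complex.zero_cpow (by simpa using h0), norm_zero, zero_mul]
      positivity
  · rw [Complex.norm_cpow_eq_rpow_re_of_pos hy, hre, ← Real.rpow_natCast, ← Real.rpow_add hy]
    exact Real.rpow_le_rpow hy0 hy2 hexp

lemma exists_norm_wignerP_le {l : ℕ} {k m : ℤ} (hk : -(l : ℤ) ≤ k) (hk' : k ≤ l)
    (hm' : m ≤ l) : ∃ B : ℝ, ∀ t ∈ Set.Icc (-1 : ℝ) 1, ‖wignerP l k m t‖ ≤ B := by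
  obtain ⟨r, hr⟩ := exists_iteratedDeriv_eq_mul ((l : ℤ) - k).toNat ((l : ℤ) + k).toNat
    ((l : ℤ) - m).toNat
  obtain ⟨R, hR⟩ := isCompact_Icc.exists_bound_of_continuousOn
    (s := Set.Icc (-1 : ℝ) 1) (f := fun t => r.eval t) r.continuous.continuousOn
  refine ⟨‖wignerC l k m‖ * 2 ^ (-((m - k : ℤ) : ℝ) / 2 + (m - k).toNat) *
    2 ^ (-((m + k : ℤ) : ℝ) / 2 + (m + k).toNat) * R, fun t ht => ?_⟩
  have h1 := norm_cpow_mul_pow_toNat_le (m - k) (y := 1 - t) (by linarith [ht.2])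
    (by linarith [ht.1])
  have h2 := norm_cpow_mul_pow_toNat_le (m + k) (y := 1 + t) (by linarith [ht.1])
    (by linarith [ht.2])
  have ha : ((l : ℤ) - k).toNat - ((l : ℤ) - m).toNat = (m - k).toNat := by lia
  have hb : ((l : ℤ) + k).toNat - ((l : ℤ) - m).toNat = (m + k).toNat := by lia
  have ht1 : (0 : ℝ) ≤ 1 - t := by linarith [ht.2]
  have ht2 : (0 : ℝ) ≤ 1 + t := by linarith [ht.1]
  rw [wignerP, hr, ha, hb]
  calc _ = ‖wignerC l k m‖ *
        (‖((1 - t : ℝ) : ℂ) ^ (-((m - k : ℤ) : ℂ) / 2)‖ * (1 - t) ^ (m - k).toNat) *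
        (‖((1 + t : ℝ) : ℂ) ^ (-((m + k : ℤ) : ℂ) / 2)‖ * (1 + t) ^ (m + k).toNat) *
        ‖r.eval t‖ := by
        simp only [norm_mul, Complex.norm_real, norm_pow, Real.norm_of_nonneg ht1,
          Real.norm_of_nonneg ht2, Complex.ofReal_sub, Complex.ofReal_add, Complex.ofReal_one]
        ring
    _ ≤ _ := by
        gcongr
        exact hR t ht

lemma measurable_wignerP (l : ℕ) (k m : ℤ) : Measurable (wignerP l k m) := by
  obtain ⟨r, hr⟩ := exists_iteratedDeriv_eq_mul ((l : ℤ) - k).toNat ((l : ℤ) + k).toNat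
    ((l : ℤ) - m).toNat
  unfold wignerP
  rw [hr]
  have := r.continuous.measurable
  fun_prop

lemma norm_wignerDFormula (l : ℕ) (k m : ℤ) (α β γ : ℝ) :
    ‖wignerDFormula l k m α β γ‖ = ‖wignerP l k m (Real.cos β)‖ := by
  have h : ∀ (j : ℤ) (θ : ℝ), ‖Complex.exp (-(j : ℂ) * θ * Complex.I)‖ = 1 := fun j θ => by
    have := Complex.norm_exp_ofReal_mul_I (-(j : ℝ) * θ)
    push_cast at this
    exact this
  rw [wignerDFormula, norm_mul, norm_mul, h, h, one_mul, mul_one]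

end WignerBound

section SO3

instance : T2Space SO3 := inferInstanceAs (T2Space {x : Mat3 // IsSO3 x})

instance : BorelSpace SO3 := ⟨rfl⟩

lemma measurable_SO3_entry (i j : Fin 3) : Measurable fun z : SO3 => (z : Mat3) i j := by
  have : Continuous fun z : SO3 => (z : Mat3) :=
    (continuous_subtype_val : Continuous (Subtype.val : {x : Mat3 // IsSO3 x} → Mat3))
  exact (this.matrix_elem i j).measurable

lemma measurable_complex_mk {X : Type*} [MeasurableSpace X] {f g : X → ℝ} (hf : Measurable f)
    (hg : Measurable g) : Measurable fun z => (⟨f z, g z⟩ : ℂ) := by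
  simp only [Complex.mk_eq_add_mul_I]
  fun_prop

lemma measurableSet_SO3_gimbal : MeasurableSet {z : SO3 | 1 - (z : Mat3) 2 2 ^ 2 = 0} :=
  (measurable_const.sub ((measurable_SO3_entry 2 2).pow_const 2)) (measurableSet_singleton 0)

lemma measurable_eulerAlpha : Measurable fun z : SO3 => eulerAlpha z :=
  Measurable.ite measurableSet_SO3_gimbal
    (Complex.measurable_arg.comp (measurable_complex_mk (measurable_SO3_entry 0 0) (measurable_SO3_entry 1 0)))
    (Complex.measurable_arg.comp (measurable_complex_mk (measurable_SO3_entry 1 2).neg (measurable_SO3_entry 0 2)))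

lemma measurable_eulerGamma : Measurable fun z : SO3 => eulerGamma z :=
  Measurable.ite measurableSet_SO3_gimbal measurable_const
    (Complex.measurable_arg.comp (measurable_complex_mk (measurable_SO3_entry 2 1) (measurable_SO3_entry 2 0)))

lemma measurable_eulerBeta : Measurable fun z : SO3 => eulerBeta z :=
  Real.measurable_arccos.comp (measurable_SO3_entry 2 2)

/-- The Wigner D-functions are bounded and measurable on SO(3). -/
lemma IsWignerFamily.measurable_and_bounded {D : ℕ → ℤ → ℤ → Mat3 → ℂ} (hD : IsWignerFamily D)
    {l : ℕ} {k m : ℤ} (hk : -(l : ℤ) ≤ k) (hk' : k ≤ l) (hm : -(l : ℤ) ≤ m) (hm' : m ≤ l) :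
    Measurable (fun z : SO3 => D l k m z) ∧ ∃ B : ℝ, ∀ z : SO3, ‖D l k m z‖ ≤ B := by
  have hform : ∀ z : SO3, D l k m z =
      wignerDFormula l k m (eulerAlpha z) (eulerBeta z) (eulerGamma z) := fun z => by
    have := hD l k m hk hk' hm hm' (eulerAlpha z) (eulerBeta z) (eulerGamma z)
      (Real.arccos_nonneg _) (Real.arccos_le_pi _)
    rwa [isSO3_eq_euler (show IsSO3 z from z.2)] at this
  simp only [hform]
  constructor
  · unfold wignerDFormula
    have := measurable_eulerAlpha
    have := measurable_eulerGamma
    have := (measurable_wignerP l k m).comp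
      (Real.continuous_cos.measurable.comp measurable_eulerBeta)
    simp only [Function.comp_def] at this
    fun_prop
  · obtain ⟨B, hB⟩ := exists_norm_wignerP_le hk hk' hm'
    exact ⟨B, fun z => by
      rw [norm_wignerDFormula]
      exact hB _ ⟨Real.neg_one_le_cos _, Real.cos_le_one _⟩⟩

lemma IsWignerFamily.integrable {D : ℕ → ℤ → ℤ → Mat3 → ℂ} (hD : IsWignerFamily D)
    {l : ℕ} {k m : ℤ} (hk : -(l : ℤ) ≤ k) (hk' : k ≤ l) (hm : -(l : ℤ) ≤ m) (hm' : m ≤ l)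
    (ρ : Measure SO3) [IsFiniteMeasure ρ] : Integrable (fun z : SO3 => D l k m z) ρ := by
  obtain ⟨hmeas, B, hB⟩ := hD.measurable_and_bounded hk hk' hm hm'
  exact Integrable.of_bound hmeas.aestronglyMeasurable B (Filter.Eventually.of_forall hB)

end SO3

section Discrete

variable {M : ℕ}

/-- The Jordan decomposition of a finite combination of Dirac measures at distinct points. -/
def discreteJordan (c : Fin M → ℝ) (x : Fin M → SO3) (hinj : Function.Injective x) :
    JordanDecomposition SO3 where
  posPart := ∑ i, ENNReal.ofReal (c i) • Measure.dirac (x i)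
  negPart := ∑ i, ENNReal.ofReal (-c i) • Measure.dirac (x i)
  posPart_finite := ⟨by simp [ENNReal.sum_lt_top]⟩
  negPart_finite := ⟨by simp [ENNReal.sum_lt_top]⟩
  mutuallySingular := by
    refine Measure.MutuallySingular.mk (s := x '' {i | c i ≤ 0}) (t := (x '' {i | c i ≤ 0})ᶜ)
      ?_ ?_ (by simp)
    · simp only [Measure.finsetSum_apply, Measure.smul_apply, smul_eq_mul]
      refine Finset.sum_eq_zero fun i _ => ?_
      rcases le_or_gt (c i) 0 with h | h
      · simp [ENNReal.ofReal_of_nonpos h]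
      · simp [hinj.eq_iff, h]
    · simp only [Measure.finsetSum_apply, Measure.smul_apply, smul_eq_mul]
      refine Finset.sum_eq_zero fun i _ => ?_
      rcases le_or_gt (c i) 0 with h | h
      · simp [hinj.eq_iff, h]
      · simp [ENNReal.ofReal_of_nonpos (neg_nonpos.mpr h.le)]

lemma sum_smul_diracSM_apply (c : Fin M → ℝ) (x : Fin M → SO3) (A : Set SO3) :
    (∑ i, c i • diracSM (x i)) A = ∑ i, c i * diracSM (x i) A := by
  simp

lemma toJordanDecomposition_sum_diracSM (c : Fin M → ℝ) {x : Fin M → SO3}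
    (hinj : Function.Injective x) :
    (∑ i, c i • diracSM (x i)).toJordanDecomposition = discreteJordan c x hinj := by
  apply SignedMeasure.toJordanDecomposition_eq
  ext A hA
  rw [sum_smul_diracSM_apply, JordanDecomposition.toSignedMeasure,
    Measure.toSignedMeasure_sub_apply hA]
  simp only [discreteJordan, measureReal_def, Measure.finsetSum_apply, Measure.smul_apply,
    smul_eq_mul]
  rw [ENNReal.toReal_sum (fun i _ => by finiteness), ENNReal.toReal_sum (fun i _ => by finiteness),
    ← Finset.sum_sub_distrib]
  refine Finset.sum_congr rfl fun i _ => ?_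
  rw [diracSM, Measure.toSignedMeasure_apply_measurable hA, ENNReal.toReal_mul,
    ENNReal.toReal_mul, ← sub_mul, ENNReal.toReal_ofReal', ENNReal.toReal_ofReal',
    measureReal_def, max_zero_sub_max_neg_zero_eq_self]

lemma tvNorm_sum_diracSM (c : Fin M → ℝ) {x : Fin M → SO3} (hinj : Function.Injective x) :
    tvNorm (∑ i, c i • diracSM (x i)) = ENNReal.ofReal (∑ i, |c i|) := by
  rw [tvNorm, SignedMeasure.totalVariation, toJordanDecomposition_sum_diracSM c hinj,
    ENNReal.ofReal_sum_of_nonneg fun i _ => abs_nonneg _]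
  simp only [discreteJordan, Measure.add_apply, Measure.finsetSum_apply, Measure.smul_apply,
    measure_univ, smul_eq_mul, mul_one]
  rw [← Finset.sum_add_distrib]
  refine Finset.sum_congr rfl fun i _ => ?_
  rcases le_total (c i) 0 with h | h
  · rw [ENNReal.ofReal_of_nonpos h, zero_add, abs_of_nonpos h]
  · rw [ENNReal.ofReal_of_nonpos (neg_nonpos.mpr h), add_zero, abs_of_nonneg h]

lemma integral_sum_smul_dirac (a : Fin M → ℝ≥0∞) (ha : ∀ i, a i ≠ ∞) (x : Fin M → SO3)
    (f : SO3 → ℂ) :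
    ∫ z, f z ∂(∑ i, a i • Measure.dirac (x i)) = ∑ i, (a i).toReal * f (x i) := by
  rw [integral_finsetSum_measure fun i _ => (integrable_dirac (by simp)).smul_measure (ha i)]
  simp [integral_smul_measure]

lemma pairSM_sum_diracSM (c : Fin M → ℝ) {x : Fin M → SO3} (hinj : Function.Injective x)
    (f : SO3 → ℂ) : pairSM (∑ i, c i • diracSM (x i)) f = ∑ i, c i * f (x i) := by
  rw [pairSM, toJordanDecomposition_sum_diracSM c hinj]
  simp only [discreteJordan]
  rw [integral_sum_smul_dirac _ (by simp), integral_sum_smul_dirac _ (by simp),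
    ← Finset.sum_sub_distrib]
  refine Finset.sum_congr rfl fun i _ => ?_
  rw [← sub_mul, ENNReal.toReal_ofReal', ENNReal.toReal_ofReal', ← Complex.ofReal_sub,
    max_zero_sub_max_neg_zero_eq_self]

/-- A signed measure concentrated on finitely many points is a combination of Dirac measures. -/
lemma eq_sum_diracSM_of_totalVariation_compl (μ : SignedMeasure SO3) {x : Fin M → SO3}
    (hinj : Function.Injective x) (h : μ.totalVariation (Set.range x)ᶜ = 0) :
    μ = ∑ i, μ {x i} • diracSM (x i) := by
  ext A hA
  have hfin : MeasurableSet (Set.range x) := (Set.finite_range x).measurableSet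
  have hsplit : μ A = μ (A ∩ Set.range x) := by
    have hnull : μ (A \ (A ∩ Set.range x)) = 0 :=
      SignedMeasure.null_of_totalVariation_zero μ
        (measure_mono_null (fun z hz hx => hz.2 ⟨hz.1, hx⟩) h)
    rw [← VectorMeasure.of_add_of_sdiff (hA.inter hfin) hA Set.inter_subset_left, hnull, add_zero]
  have hU : A ∩ Set.range x = ⋃ i, A ∩ {x i} := by
    rw [← Set.inter_iUnion, Set.iUnion_singleton_eq_range]
  rw [hsplit, hU, VectorMeasure.of_disjoint_iUnion
    (fun i => hA.inter (measurableSet_singleton _)), tsum_fintype, sum_smul_diracSM_apply]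
  · refine Finset.sum_congr rfl fun i _ => ?_
    rw [diracSM, Measure.toSignedMeasure_apply_measurable hA, measureReal_def,
      Measure.dirac_apply]
    by_cases hi : x i ∈ A <;> simp [hi]
  · intro i j hij
    refine Set.disjoint_left.mpr fun z hz hz' => hij (hinj ?_)
    rw [← Set.mem_singleton_iff.mp hz.2, ← Set.mem_singleton_iff.mp hz'.2]

end Discrete

section Pairing

lemma pairSM_eq_of_mem_span {S : Set (SO3 → ℂ)} {μ ν : SignedMeasure SO3}
    (hint : ∀ f ∈ S, ∀ (ρ : Measure SO3) [IsFiniteMeasure ρ], Integrable f ρ)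
    (heq : ∀ f ∈ S, pairSM μ f = pairSM ν f) {q : SO3 → ℂ} (hq : q ∈ Submodule.span ℂ S) :
    (∀ (ρ : Measure SO3) [IsFiniteMeasure ρ], Integrable q ρ) ∧ pairSM μ q = pairSM ν q := by
  induction hq using Submodule.span_induction with
  | mem f hf => exact ⟨hint f hf, heq f hf⟩
  | zero => exact ⟨fun ρ _ => integrable_zero _ _ _, by simp [pairSM]⟩
  | add f g _ _ hf hg =>
    have hadd : ∀ ρ : SignedMeasure SO3, pairSM ρ (f + g) = pairSM ρ f + pairSM ρ g := fun ρ => by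
      simp only [pairSM, Pi.add_apply]
      rw [integral_add (hf.1 _) (hg.1 _), integral_add (hf.1 _) (hg.1 _)]
      ring
    exact ⟨fun ρ _ => (hf.1 ρ).add (hg.1 ρ), by rw [hadd, hadd, hf.2, hg.2]⟩
  | smul a f _ hf =>
    have hsmul : ∀ ρ : SignedMeasure SO3, pairSM ρ (a • f) = a * pairSM ρ f := fun ρ => by
      simp only [pairSM, Pi.smul_apply, smul_eq_mul, integral_const_mul]
      ring
    exact ⟨fun ρ _ => (hf.1 ρ).smul a, by rw [hsmul, hsmul, hf.2]⟩

lemma norm_pairSM_le (μ : SignedMeasure SO3) {q : SO3 → ℂ}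
    (hq : ∀ (ρ : Measure SO3) [IsFiniteMeasure ρ], Integrable q ρ) :
    ‖pairSM μ q‖ ≤ ∫ z, ‖q z‖ ∂μ.totalVariation := by
  rw [SignedMeasure.totalVariation, integral_add_measure (hq _).norm (hq _).norm]
  exact (norm_sub_le _ _).trans
    (add_le_add (norm_integral_le_integral_norm _) (norm_integral_le_integral_norm _))

/-- A measure whose pairing with `q` reaches the total variation, where `‖q‖ ≤ 1`, is
concentrated where `‖q‖ = 1`. -/
lemma totalVariation_eq_zero_of_le_norm_pairSM (μ : SignedMeasure SO3) {q : SO3 → ℂ}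
    (hq : ∀ (ρ : Measure SO3) [IsFiniteMeasure ρ], Integrable q ρ) (hq1 : ∀ z, ‖q z‖ ≤ 1)
    {A : Set SO3} (hA : ∀ z ∈ A, ‖q z‖ < 1)
    (hle : μ.totalVariation.real Set.univ ≤ ‖pairSM μ q‖) : μ.totalVariation A = 0 := by
  have hint : Integrable (fun z => 1 - ‖q z‖) μ.totalVariation :=
    (integrable_const 1).sub (hq _).norm
  have hnn : 0 ≤ fun z => 1 - ‖q z‖ := fun z => sub_nonneg.mpr (hq1 z)
  have hzero : ∫ z, 1 - ‖q z‖ ∂μ.totalVariation = 0 := by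
    refine le_antisymm ?_ (integral_nonneg hnn)
    rw [integral_sub (integrable_const 1) (hq _).norm, integral_const, smul_eq_mul, mul_one]
    linarith [norm_pairSM_le μ hq]
  have hae := (integral_eq_zero_iff_of_nonneg hnn hint).mp hzero
  refine measure_mono_null (fun z hz => ?_) (ae_iff.mp hae)
  have := hA z hz
  simp only [Pi.zero_apply, Set.mem_ofPred_eq]
  exact (sub_pos.mpr this).ne'

end Pairing

lemma exists_sign (a : ℝ) : ∃ u : ℝ, (u = 1 ∨ u = -1) ∧ a * u = |a| := by
  rcases le_total 0 a with h | h
  · exact ⟨1, Or.inl rfl, by rw [mul_one, abs_of_nonneg h]⟩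
  · exact ⟨-1, Or.inr rfl, by rw [abs_of_nonpos h]; ring⟩

end

open MeasureTheory in
theorem dual_certificate_implies_unique_recovery
    (N : ℕ)
    (M : ℕ) (c : Fin M → ℝ) (hc : ∀ i, c i ≠ 0)
    (x : Fin M → SO3) (hinj : Function.Injective x)
    (D : ℕ → ℤ → ℤ → Mat3 → ℂ) (hD : IsWignerFamily D)
    (hcert : ∀ u : Fin M → ℝ, (∀ i, u i = 1 ∨ u i = -1) →
      ∃ q : SO3 → ℂ,
        q ∈ Submodule.span ℂ {f : SO3 → ℂ |
            ∃ (l : ℕ) (k m : ℤ), l ≤ N ∧ -(l : ℤ) ≤ k ∧ k ≤ l ∧ -(l : ℤ) ≤ m ∧ m ≤ l ∧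
              f = fun z : SO3 => D l k m (z : Mat3)} ∧
        (∀ i, q (x i) = (u i : ℂ)) ∧
        (∀ z : SO3, z ∉ Set.range x → ‖q z‖ < 1))
    (μ : SignedMeasure SO3)
    (hmom : ∀ l : ℕ, l ≤ N → ∀ k m : ℤ, -(l : ℤ) ≤ k → k ≤ l → -(l : ℤ) ≤ m → m ≤ l →
      pairSM μ (fun z => D l k m (z : Mat3)) =
        pairSM (∑ i, c i • diracSM (x i)) (fun z => D l k m (z : Mat3)))
    (hne : μ ≠ ∑ i, c i • diracSM (x i)) :
    tvNorm (∑ i, c i • diracSM (x i)) < tvNorm μ := by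
  have hspan : ∀ {q : SO3 → ℂ}, q ∈ Submodule.span ℂ {f : SO3 → ℂ |
      ∃ (l : ℕ) (k m : ℤ), l ≤ N ∧ -(l : ℤ) ≤ k ∧ k ≤ l ∧ -(l : ℤ) ≤ m ∧ m ≤ l ∧
        f = fun z : SO3 => D l k m (z : Mat3)} →
      (∀ (ρ : Measure SO3) [IsFiniteMeasure ρ], Integrable q ρ) ∧
        pairSM μ q = pairSM (∑ i, c i • diracSM (x i)) q := by
    refine fun hq => pairSM_eq_of_mem_span ?_ ?_ hq
    · rintro f ⟨l, k, m, -, hk, hk', hm, hm', rfl⟩ ρ _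
      exact hD.integrable hk hk' hm hm' ρ
    · rintro f ⟨l, k, m, hl, hk, hk', hm, hm', rfl⟩
      exact hmom l hl k m hk hk' hm hm'
  by_contra hlt
  rw [not_lt, tvNorm_sum_diracSM c hinj] at hlt
  have htv : μ.totalVariation.real Set.univ ≤ ∑ i, |c i| :=
    ENNReal.toReal_le_of_le_ofReal (Finset.sum_nonneg fun i _ => abs_nonneg _) hlt
  choose u hu hcu using fun i => exists_sign (c i)
  obtain ⟨q, hq, hqx, hqlt⟩ := hcert u hu
  obtain ⟨hqint, hqpair⟩ := hspan hq
  have hpair : pairSM μ q = ((∑ i, |c i| : ℝ) : ℂ) := by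
    rw [hqpair, pairSM_sum_diracSM c hinj, Complex.ofReal_sum]
    exact Finset.sum_congr rfl fun i _ => by rw [hqx, ← Complex.ofReal_mul, hcu]
  have hq1 : ∀ z, ‖q z‖ ≤ 1 := fun z => by
    by_cases hz : z ∈ Set.range x
    · obtain ⟨i, rfl⟩ := hz
      rw [hqx, Complex.norm_real]
      rcases hu i with h | h <;> simp [h]
    · exact (hqlt z hz).le
  have hconc : μ.totalVariation (Set.range x)ᶜ = 0 := by
    refine totalVariation_eq_zero_of_le_norm_pairSM μ hqint hq1 hqlt ?_
    rw [hpair, Complex.norm_real]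
    exact htv.trans (le_abs_self _)
  have hμ := eq_sum_diracSM_of_totalVariation_compl μ hinj hconc
  choose v hv hbv using fun i => exists_sign (μ {x i} - c i)
  obtain ⟨p, hp, hpx, -⟩ := hcert v hv
  have hppair := (hspan hp).2
  rw [hμ, pairSM_sum_diracSM _ hinj, pairSM_sum_diracSM _ hinj] at hppair
  have hsum : ∑ i, |μ {x i} - c i| = 0 := by
    have : ((∑ i, |μ {x i} - c i| : ℝ) : ℂ) = 0 := by
      rw [Complex.ofReal_sum, ← sub_eq_zero.mpr hppair, ← Finset.sum_sub_distrib]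
      exact Finset.sum_congr rfl fun i _ => by
        rw [← hbv, hpx]
        push_cast
        ring
    exact_mod_cast this
  rw [Finset.sum_eq_zero_iff_of_nonneg fun i _ => abs_nonneg _] at hsum
  refine hne (hμ.trans (Finset.sum_congr rfl fun i hi => ?_))
  rw [sub_eq_zero.mp (abs_eq_zero.mp (hsum i hi))]
end

section
/- Let s be an even integer with s ≥ 6, let N ≥ 2s, and let x,y ∈ SO(3) with ω(y⁻¹x) ≥ π/(2(N+1)). Then for all indices n, i ∈ {1,2,3}: |X_n^y σ_N(x,y)| ≤ c_{1,s}/((N+1)^{s−1}·ω(y⁻¹x)^s) and |X_i^x X_n^y σ_N(x,y)| ≤ c_{2,s}/((N+1)^{s−2}·ω(y⁻¹x)^s). -/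
noncomputable section

/-- generators of so(3) -/
def Lgen : Fin 3 → Mat3 :=
  ![!![0, 0, 0; 0, 0, -1; 0, 1, 0],
    !![0, 0, 1; 0, 0, 0; -1, 0, 0],
    !![0, -1, 0; 1, 0, 0; 0, 0, 0]]

/-- derivative in the first variable along generator `i` -/
def Xx (i : Fin 3) (f : Mat3 → Mat3 → ℝ) : Mat3 → Mat3 → ℝ :=
  fun x y => deriv (fun t : ℝ => f (x * NormedSpace.exp (t • Lgen i)) y) 0

/-- derivative in the second variable along generator `i` -/
def Xy (i : Fin 3) (f : Mat3 → Mat3 → ℝ) : Mat3 → Mat3 → ℝ :=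
  fun x y => deriv (fun t : ℝ => f x (y * NormedSpace.exp (t • Lgen i))) 0

/-- iterated integrals of the sign of the Chebyshev polynomial: the perfect B-spline chain -/
def fspline (s : ℕ) : ℕ → ℝ → ℝ
  | 0 => fun x => (-1 : ℝ) ^ (s - 1) * Real.sign ((Polynomial.Chebyshev.U ℝ ((s : ℤ) - 1)).eval x)
  | (k + 1) => fun x => ∫ t in (-1 : ℝ)..x, fspline s k t

/-- the scaled perfect B-spline g̃_{s-1} -/
def gtilde (s : ℕ) (x : ℝ) : ℝ := fspline s (s - 1) (2 * x)

/-- discrete norm ‖g̃‖_{1,N} -/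
def gnorm (s N : ℕ) : ℝ :=
  ∑ k ∈ Finset.Icc (-(N : ℤ)) (N : ℤ), gtilde s ((k : ℝ) / (2 * ((N : ℝ) + 1)))

/-- the trigonometric kernel σ̃_N (real-valued) -/
def sigmaT (s N : ℕ) (t : ℝ) : ℝ :=
  ((1 / (gnorm s N : ℂ)) *
      ∑ k ∈ Finset.Icc (-(N : ℤ)) (N : ℤ),
        (gtilde s ((k : ℝ) / (2 * ((N : ℝ) + 1))) : ℂ) * Complex.exp ((k : ℂ) * t * Complex.I)).re

/-- the zonal kernel σ_N on SO(3) -/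
def sigmaK (s N : ℕ) (x y : Mat3) : ℝ := sigmaT s N (rotAngle (y⁻¹ * x))

/-- rotation axis components -/
def axisComp : Fin 3 → Mat3 → ℝ :=
  ![fun x => (x 2 1 - x 1 2) / (2 * Real.sin (rotAngle x)),
    fun x => (x 0 2 - x 2 0) / (2 * Real.sin (rotAngle x)),
    fun x => (x 1 0 - x 0 1) / (2 * Real.sin (rotAngle x))]

/-- Levi-Civita symbol on `Fin 3` -/
def eps3 (a b c : Fin 3) : ℝ :=
  if (a, b, c) = (0, 1, 2) ∨ (a, b, c) = (1, 2, 0) ∨ (a, b, c) = (2, 0, 1) then 1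
  else if (a, b, c) = (2, 1, 0) ∨ (a, b, c) = (1, 0, 2) ∨ (a, b, c) = (0, 2, 1) then -1
  else 0

/-- constants c_{l,s} -/
def cConst : ℕ → ℕ → ℝ
  | 0, s => 1.02 * (Nat.factorial (s - 1)) * 2 ^ s * s
  | 1, s => 1.02 * (Nat.factorial (s - 1)) * 2 ^ s * (2 * s)
  | 2, s => 1.02 * (Nat.factorial (s - 1)) * 2 ^ s * (4 * s + 1)
  | _, s => 1.02 * (Nat.factorial (s - 1)) * 2 ^ s * (9 * s - 2)

/-- ζ(m) for natural m -/
def zetaNat (m : ℕ) : ℝ := ∑' n : ℕ, (1 : ℝ) / ((n : ℝ) + 1) ^ m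

/-- constants C_{i,s} = 124 c_{i,s} ζ(s-2) -/
def CConst (i s : ℕ) : ℝ := 124 * cConst i s * zetaNat (s - 2)

end

open scoped Real
open MeasureTheory

/-! ### The perfect spline chain -/

/-- The knots `-cos (jπ/s)` of the perfect spline, in increasing order. -/
noncomputable def splineKnot (s j : ℕ) : ℝ := -Real.cos (j * π / s)

lemma splineKnot_zero (s : ℕ) : splineKnot s 0 = -1 := by simp [splineKnot]

lemma splineKnot_self {s : ℕ} (hs : 0 < s) : splineKnot s s = 1 := by
  have : (s : ℝ) ≠ 0 := by positivity
  simp [splineKnot, mul_div_cancel_left₀ π this]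

lemma splineKnot_mem (s j : ℕ) : splineKnot s j ∈ Set.Icc (-1 : ℝ) 1 :=
  ⟨neg_le_neg (Real.cos_le_one _), by
    unfold splineKnot; linarith [Real.neg_one_le_cos (j * π / s)]⟩

lemma splineKnot_le_succ {s j : ℕ} (hj : j < s) : splineKnot s j ≤ splineKnot s (j + 1) := by
  have hs : (0 : ℝ) < s := by exact_mod_cast (Nat.zero_le j).trans_lt hj
  have hj' : ((j + 1 : ℕ) : ℝ) ≤ s := by exact_mod_cast hj
  refine neg_le_neg (Real.cos_le_cos_of_nonneg_of_le_pi (by positivity) ?_ ?_)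
  · rw [div_le_iff₀ hs]; nlinarith [Real.pi_pos]
  · gcongr; simp

lemma abs_fspline_zero_le (s : ℕ) (x : ℝ) : |fspline s 0 x| ≤ 1 := by
  simp only [fspline, abs_mul, abs_pow, abs_neg, abs_one, one_pow, one_mul]
  rcases Real.sign_apply_eq
    ((Polynomial.Chebyshev.U ℝ ((s : ℤ) - 1)).eval x) with h | h | h <;> simp [h]

lemma measurable_fspline_zero (s : ℕ) : Measurable (fspline s 0) := by
  have h : Measurable Real.sign := by
    unfold Real.sign
    exact Measurable.ite measurableSet_Iio measurable_const
      (Measurable.ite measurableSet_Ioi measurable_const measurable_const)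
  exact (h.comp (Polynomial.continuous _).measurable).const_mul _

lemma intervalIntegrable_fspline_zero (s : ℕ) (a b : ℝ) :
    IntervalIntegrable (fspline s 0) volume a b := by
  rw [intervalIntegrable_iff]
  exact Measure.integrableOn_of_bounded (M := 1) (by simp)
    (measurable_fspline_zero s).aestronglyMeasurable
    (Filter.Eventually.of_forall fun x => by simpa using abs_fspline_zero_le s x)

lemma continuous_fspline_succ (s k : ℕ) : Continuous (fspline s (k + 1)) := by
  induction k with
  | zero => exact intervalIntegral.continuous_primitive (intervalIntegrable_fspline_zero s) _
  | succ k ih =>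
    exact intervalIntegral.continuous_primitive (fun a b => ih.intervalIntegrable a b) _

lemma intervalIntegrable_fspline (s k : ℕ) (a b : ℝ) :
    IntervalIntegrable (fspline s k) volume a b := by
  cases k with
  | zero => exact intervalIntegrable_fspline_zero s a b
  | succ k => exact (continuous_fspline_succ s k).intervalIntegrable a b

lemma intervalIntegrable_ofReal_fspline (s k : ℕ) (a b : ℝ) :
    IntervalIntegrable (fun x => (fspline s k x : ℂ)) volume a b :=
  ⟨(intervalIntegrable_fspline s k a b).1.ofReal, (intervalIntegrable_fspline s k a b).2.ofReal⟩

lemma fspline_succ_neg_one (s k : ℕ) : fspline s (k + 1) (-1) = 0 := by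
  simp [fspline]

lemma fspline_zero_eq {s : ℕ} (hs : 0 < s) (he : Even s) {j : ℕ} (hj : j < s) {x : ℝ}
    (hx : x ∈ Set.Ioo (splineKnot s j) (splineKnot s (j + 1))) :
    fspline s 0 x = (-1) ^ j := by
  have hs0 : (0 : ℝ) < s := by exact_mod_cast hs
  have hx1 : -1 < x := (splineKnot_mem s j).1.trans_lt hx.1
  have hx2 : x < 1 := hx.2.trans_le (splineKnot_mem s _).2
  obtain ⟨φ, hφ0, hφπ, rfl⟩ : ∃ φ, 0 < φ ∧ φ < π ∧ x = -Real.cos φ := by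
    refine ⟨Real.arccos (-x), Real.arccos_pos.2 (by linarith), ?_, ?_⟩
    · refine lt_of_le_of_ne (Real.arccos_le_pi _) fun h => ?_
      rw [Real.arccos_eq_pi] at h; linarith
    · rw [Real.cos_arccos (by linarith) (by linarith)]; ring
  have hj' : ((j + 1 : ℕ) : ℝ) ≤ s := by exact_mod_cast hj
  have hl : j * π / s < φ := by
    have := hx.1
    simp only [splineKnot, neg_lt_neg_iff] at this
    by_contra! h
    refine absurd this (not_lt.2 (Real.cos_le_cos_of_nonneg_of_le_pi hφ0.le ?_ h))
    rw [div_le_iff₀ hs0]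
    push_cast at hj'; nlinarith [Real.pi_pos]
  have hu : φ < (j + 1 : ℕ) * π / s := by
    have := hx.2
    simp only [splineKnot, neg_lt_neg_iff] at this
    by_contra! h
    exact absurd this (not_lt.2 (Real.cos_le_cos_of_nonneg_of_le_pi (by positivity) hφπ.le h))
  rw [div_lt_iff₀ hs0] at hl
  rw [lt_div_iff₀ hs0] at hu
  push_cast at hu
  have hsin : 0 < Real.sin φ := Real.sin_pos_of_pos_of_lt_pi hφ0 hφπ
  have hpos : 0 < Real.sin (s * φ - j * π) :=
    Real.sin_pos_of_pos_of_lt_pi (by linarith) (by linarith)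
  have hU := Polynomial.Chebyshev.U_real_cos (π - φ) ((s : ℤ) - 1)
  rw [Real.cos_pi_sub, Real.sin_pi_sub] at hU
  have hrhs : Real.sin ((((s : ℤ) - 1 : ℤ) + 1 : ℝ) * (π - φ))
      = -((-1) ^ j * Real.sin (s * φ - j * π)) := by
    rw [Real.sin_sub_nat_mul_pi]
    have : (((s : ℤ) - 1 : ℤ) + 1 : ℝ) * (π - φ) = s * π - s * φ := by push_cast; ring
    rw [this, Real.sin_nat_mul_pi_sub, he.neg_one_pow, ← mul_assoc, ← mul_pow]
    norm_num
  rw [hrhs] at hU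
  have hodd : (-1 : ℝ) ^ (s - 1) = -1 := Odd.neg_one_pow (Nat.Even.sub_odd hs he odd_one)
  simp only [fspline, hodd]
  rcases Nat.even_or_odd j with h | h
  · rw [h.neg_one_pow] at hU ⊢
    rw [Real.sign_of_neg (by nlinarith)]; norm_num
  · rw [h.neg_one_pow] at hU ⊢
    rw [Real.sign_of_pos (by nlinarith)]; norm_num

/-- Integration against the piecewise constant top derivative of the spline. -/
lemma integral_mul_fspline_zero {s : ℕ} (hs : 0 < s) (he : Even s) {ψ : ℝ → ℂ}
    (hψ : Continuous ψ) :
    ∫ x in (-1 : ℝ)..1, ψ x * fspline s 0 x =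
      ∑ j ∈ Finset.range s,
        (-1) ^ j * ∫ x in splineKnot s j..splineKnot s (j + 1), ψ x := by
  have hint : ∀ a b : ℝ, IntervalIntegrable (fun x => ψ x * (fspline s 0 x : ℂ)) volume a b :=
    fun a b => (intervalIntegrable_ofReal_fspline s 0 a b).continuousOn_mul hψ.continuousOn
  have := intervalIntegral.sum_integral_adjacent_intervals (a := splineKnot s) (n := s)
    (fun k _ => hint _ _)
  rw [splineKnot_zero, splineKnot_self hs] at this
  rw [← this]
  refine Finset.sum_congr rfl fun j hj => ?_
  rw [← intervalIntegral.integral_const_mul]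
  refine intervalIntegral.integral_congr_Ioo_of_le
    (splineKnot_le_succ (Finset.mem_range.1 hj)) fun x hx => ?_
  simp only [fspline_zero_eq hs he (Finset.mem_range.1 hj) hx]
  push_cast; ring

lemma hasDerivAt_fspline_succ_succ (s k : ℕ) (x : ℝ) :
    HasDerivAt (fspline s (k + 2)) (fspline s (k + 1) x) x :=
  (continuous_fspline_succ s k).integral_hasStrictDerivAt _ _ |>.hasDerivAt

lemma fspline_one_sub_splineKnot {s : ℕ} (hs : 0 < s) (he : Even s) {j : ℕ} (hj : j < s) {x : ℝ}
    (hx : x ∈ Set.Icc (splineKnot s j) (splineKnot s (j + 1))) :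
    fspline s 1 x = fspline s 1 (splineKnot s j) + (-1) ^ j * (x - splineKnot s j) := by
  have h : ∫ t in splineKnot s j..x, fspline s 0 t = ∫ t in splineKnot s j..x, (-1 : ℝ) ^ j :=
    intervalIntegral.integral_congr_Ioo_of_le hx.1 fun t ht =>
      fspline_zero_eq hs he hj ⟨ht.1, ht.2.trans_le hx.2⟩
  rw [intervalIntegral.integral_const, smul_eq_mul] at h
  have h2 := intervalIntegral.integral_add_adjacent_intervals
    (intervalIntegrable_fspline_zero s (-1) (splineKnot s j))
    (intervalIntegrable_fspline_zero s (splineKnot s j) x)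
  change _ = fspline s 1 x at h2
  rw [← h2, h]
  change fspline s 1 (splineKnot s j) + _ = _
  ring

lemma hasDerivAt_fspline_one {s : ℕ} {x : ℝ}
    (hx : (Polynomial.Chebyshev.U ℝ ((s : ℤ) - 1)).eval x ≠ 0) :
    HasDerivAt (fspline s 1) (fspline s 0 x) x := by
  have hsign : ContinuousAt Real.sign ((Polynomial.Chebyshev.U ℝ ((s : ℤ) - 1)).eval x) := by
    rcases hx.lt_or_gt with h | h
    · refine (continuousAt_const (y := (-1 : ℝ))).congr ?_
      filter_upwards [Iio_mem_nhds h] with y hy using (Real.sign_of_neg hy).symm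
    · refine (continuousAt_const (y := (1 : ℝ))).congr ?_
      filter_upwards [Ioi_mem_nhds h] with y hy using (Real.sign_of_pos hy).symm
  have hc : ContinuousAt (fspline s 0) x :=
    (ContinuousAt.comp (f := fun x => (Polynomial.Chebyshev.U ℝ ((s : ℤ) - 1)).eval x) hsign
      (Polynomial.continuous _).continuousAt).const_mul _
  exact intervalIntegral.integral_hasDerivAt_right (intervalIntegrable_fspline_zero s _ _)
    (measurable_fspline_zero s).stronglyMeasurable.stronglyMeasurableAtFilter hc

/-- Integration by parts along the spline chain. -/
lemma integral_mul_fspline_succ {s : ℕ} (hs : 0 < s) (k : ℕ) {φ φ' : ℝ → ℂ}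
    (hφ : ∀ x, HasDerivAt φ (φ' x) x) (hφ' : Continuous φ') :
    ∫ x in (-1 : ℝ)..1, φ' x * fspline s (k + 1) x =
      φ 1 * fspline s (k + 1) 1 - ∫ x in (-1 : ℝ)..1, φ x * fspline s k x := by
  have hφc : Continuous φ := continuous_iff_continuousAt.2 fun x => (hφ x).continuousAt
  have hf : Continuous fun x => (fspline s (k + 1) x : ℂ) :=
    Complex.continuous_ofReal.comp (continuous_fspline_succ s k)
  have hi1 : IntervalIntegrable (fun x => φ' x * (fspline s (k + 1) x : ℂ)) volume (-1) 1 :=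
    (hφ'.mul hf).intervalIntegrable _ _
  have hi2 : IntervalIntegrable (fun x => φ x * (fspline s k x : ℂ)) volume (-1) 1 :=
    (intervalIntegrable_ofReal_fspline s k _ _).continuousOn_mul hφc.continuousOn
  have hU : Polynomial.Chebyshev.U ℝ ((s : ℤ) - 1) ≠ 0 := by
    intro h
    have := Polynomial.Chebyshev.U_eval_one (R := ℝ) ((s : ℤ) - 1)
    rw [h] at this
    have h0 : (s : ℝ) = 0 := by simpa using this.symm
    exact hs.ne' (by exact_mod_cast h0)
  have key := integral_eq_of_hasDerivAt_off_countable
    (fun x => φ x * (fspline s (k + 1) x : ℂ))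
    (fun x => φ' x * (fspline s (k + 1) x : ℂ) + φ x * (fspline s k x : ℂ))
    (a := -1) (b := 1)
    (s := {x | (Polynomial.Chebyshev.U ℝ ((s : ℤ) - 1)).eval x = 0})
    ((Polynomial.finite_setOfPred_isRoot hU).countable)
    (hφc.mul hf).continuousOn
    (fun x hx => by
      refine (hφ x).mul (HasDerivAt.ofReal_comp ?_)
      cases k with
      | zero => exact hasDerivAt_fspline_one hx.2
      | succ k => exact hasDerivAt_fspline_succ_succ s k x)
    (hi1.add hi2)
  rw [intervalIntegral.integral_add hi1 hi2, fspline_succ_neg_one] at key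
  rw [eq_sub_iff_add_eq, key]; simp

/-- Alternating sums of `x ^ m * cos (lθ)` over the full period of knots. -/
noncomputable def alternatingKnotSum (s m : ℕ) (l : ℤ) : ℝ :=
  ∑ j ∈ Finset.range (2 * s), (-1) ^ j * splineKnot s j ^ m * Real.cos (l * (j * π / s))

lemma alternatingKnotSum_neg (s m : ℕ) (l : ℤ) :
    alternatingKnotSum s m (-l) = alternatingKnotSum s m l := by
  simp [alternatingKnotSum]

lemma alternatingKnotSum_succ (s m : ℕ) (l : ℤ) :
    alternatingKnotSum s (m + 1) l =
      -(alternatingKnotSum s m (l + 1) + alternatingKnotSum s m (l - 1)) / 2 := by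
  simp only [alternatingKnotSum, ← Finset.sum_add_distrib, ← Finset.sum_neg_distrib,
    Finset.sum_div]
  refine Finset.sum_congr rfl fun j _ => ?_
  push_cast
  rw [add_mul, sub_mul, one_mul, Real.cos_add, Real.cos_sub, pow_succ]
  simp only [splineKnot]
  ring

lemma alternatingKnotSum_zero_eq_zero {s : ℕ} {l : ℤ} (hl : |l| < s) :
    alternatingKnotSum s 0 l = 0 := by
  have hs : (0 : ℝ) < s := by exact_mod_cast (abs_nonneg l).trans_lt hl
  have hl' : |(l : ℝ)| < s := by exact_mod_cast hl
  set β : ℝ := l * (π / (2 * s)) with hβ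
  have hcos : 0 < Real.cos β := by
    apply Real.cos_pos_of_mem_Ioo
    rw [abs_lt] at hl'
    have : β = (l / s) * (π / 2) := by rw [hβ]; field_simp
    have h1 : -1 < (l : ℝ) / s := by rw [lt_div_iff₀ hs]; linarith
    have h2 : (l : ℝ) / s < 1 := by rw [div_lt_iff₀ hs]; linarith
    rw [this]; constructor <;> nlinarith [Real.pi_pos]
  have htel := Finset.sum_range_sub' (fun j : ℕ => (-1 : ℝ) ^ j * Real.cos (β * (2 * j - 1)))
    (2 * s)
  have hend : (-1 : ℝ) ^ (2 * s) * Real.cos (β * (2 * (2 * s : ℕ) - 1)) = Real.cos β := by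
    have : β * (2 * (2 * s : ℕ) - 1) = -β + l * (2 * π) := by
      rw [hβ]; push_cast; field_simp; ring
    rw [this, Real.cos_add_int_mul_two_pi, Real.cos_neg, pow_mul]; simp
  rw [hend] at htel
  have hsum : 2 * Real.cos β * alternatingKnotSum s 0 l = 0 := by
    have h0 : (-1 : ℝ) ^ 0 * Real.cos (β * (2 * (0 : ℕ) - 1)) - Real.cos β = 0 := by simp
    rw [← h0, ← htel, alternatingKnotSum, Finset.mul_sum]
    refine Finset.sum_congr rfl fun j _ => ?_
    have e1 : (l : ℝ) * (j * π / s) = 2 * j * β := by rw [hβ]; field_simp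
    have e2 : β * (2 * ((j + 1 : ℕ) : ℝ) - 1) = 2 * j * β + β := by push_cast; ring
    have e3 : β * (2 * (j : ℝ) - 1) = 2 * j * β - β := by ring
    rw [e1, e2, e3, Real.cos_add, Real.cos_sub]
    ring
  simpa [hcos.ne'] using hsum

lemma alternatingKnotSum_eq_zero {s : ℕ} (m : ℕ) {l : ℤ} (hl : |l| + m < s) :
    alternatingKnotSum s m l = 0 := by
  induction m generalizing l with
  | zero => exact alternatingKnotSum_zero_eq_zero (by simpa using hl)
  | succ m ih =>
    push_cast at hl
    rw [alternatingKnotSum_succ, ih, ih]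
    · simp
    · have := abs_sub l 1; simp at this; omega
    · have := abs_add_le l 1; simp at this; omega

lemma alternatingKnotSum_zero_self {s : ℕ} (hs : 0 < s) :
    alternatingKnotSum s 0 s = 2 * s := by
  have hs' : (s : ℝ) ≠ 0 := by positivity
  have : ∀ j ∈ Finset.range (2 * s),
      (-1 : ℝ) ^ j * splineKnot s j ^ 0 * Real.cos ((s : ℤ) * (j * π / s)) = 1 := by
    intro j _
    have : ((s : ℤ) : ℝ) * (j * π / s) = j * π := by push_cast; field_simp
    rw [this, Real.cos_nat_mul_pi, pow_zero, mul_one, ← mul_pow]; norm_num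
  rw [alternatingKnotSum, Finset.sum_congr rfl this]
  simp

lemma alternatingKnotSum_complement {s : ℕ} {m : ℕ} (hm : m < s) :
    alternatingKnotSum s m ((s : ℤ) - m) = (-1 / 2) ^ m * (2 * s) := by
  induction m with
  | zero => simpa using alternatingKnotSum_zero_self (by omega)
  | succ m ih =>
    have h1 : ((s : ℤ) - (m + 1 : ℕ)) + 1 = s - m := by push_cast; ring
    rw [alternatingKnotSum_succ, h1, ih (by omega), alternatingKnotSum_eq_zero m, pow_succ]
    · ring
    · rw [abs_of_nonneg (by push_cast; omega)]; push_cast; omega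

lemma alternatingKnotSum_self_zero {s : ℕ} (hs : 0 < s) (he : Even s) :
    alternatingKnotSum s s 0 = (1 / 2) ^ s * (4 * s) := by
  obtain ⟨m, rfl⟩ : ∃ m, s = m + 1 := ⟨s - 1, by omega⟩
  have h := alternatingKnotSum_complement (Nat.lt_succ_self m)
  have h1 : ((m.succ : ℤ) - m) = 1 := by push_cast; ring
  rw [h1] at h
  have hm : Odd m := by
    rcases Nat.even_or_odd m with h | h
    · exact absurd he (by simpa using h.add_one)
    · exact h
  rw [alternatingKnotSum_succ, zero_add, zero_sub, alternatingKnotSum_neg, h,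
    neg_div 2 (1 : ℝ), hm.neg_pow, pow_succ]
  push_cast; ring

lemma splineKnot_reflect {s j : ℕ} (hs : 0 < s) (hj : j ≤ 2 * s) :
    splineKnot s (2 * s - j) = splineKnot s j := by
  have hs' : (s : ℝ) ≠ 0 := by positivity
  have : ((2 * s - j : ℕ) : ℝ) * π / s = 2 * π - j * π / s := by
    rw [Nat.cast_sub hj]; push_cast; field_simp
  rw [splineKnot, this, Real.cos_two_pi_sub, splineKnot]

lemma sum_alternating_sub_splineKnot {s : ℕ} (hs : 0 < s) (m : ℕ) :
    ∑ j ∈ Finset.range s, (-1) ^ j * (splineKnot s (j + 1) ^ m - splineKnot s j ^ m) =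
      -alternatingKnotSum s m 0 := by
  simp only [alternatingKnotSum, Int.cast_zero, zero_mul, Real.cos_zero, mul_one]
  rw [two_mul, Finset.sum_range_add, ← Finset.sum_range_reflect (fun x => (-1 : ℝ) ^ (s + x) * _),
    ← Finset.sum_add_distrib, ← Finset.sum_neg_distrib]
  refine Finset.sum_congr rfl fun j hj => ?_
  have hj := Finset.mem_range.1 hj
  have h1 : s + (s - 1 - j) = 2 * s - (j + 1) := by omega
  have h2 : (-1 : ℝ) ^ (2 * s - (j + 1)) = -(-1) ^ j := by
    have h3 : (-1 : ℝ) ^ (2 * s - (j + 1)) * (-1) ^ (j + 1) = 1 := by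
      rw [← pow_add, Nat.sub_add_cancel (by omega), pow_mul]; simp
    rcases Nat.even_or_odd j with h | h
    · rw [h.add_one.neg_one_pow] at h3; rw [h.neg_one_pow]; linarith
    · rw [h.add_one.neg_one_pow] at h3; rw [h.neg_one_pow]; linarith
  rw [h1, h2, splineKnot_reflect hs (by omega)]
  ring

lemma integral_pow_mul_fspline_zero {s : ℕ} (hs : 0 < s) (he : Even s) (m : ℕ) :
    ∫ x in (-1 : ℝ)..1, (x : ℂ) ^ m * fspline s 0 x =
      ((-alternatingKnotSum s (m + 1) 0 / (m + 1) : ℝ) : ℂ) := by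
  rw [integral_mul_fspline_zero hs he (by fun_prop), ← sum_alternating_sub_splineKnot hs,
    Finset.sum_div]
  push_cast
  refine Finset.sum_congr rfl fun j _ => ?_
  have : ∀ a b : ℝ, ∫ x in a..b, (x : ℂ) ^ m = (((b ^ (m + 1) - a ^ (m + 1)) / (m + 1) : ℝ) : ℂ) :=
    fun a b => by
      rw [← integral_pow, ← intervalIntegral.integral_ofReal]; simp
  rw [this]; push_cast; ring

lemma integral_pow_mul_fspline_succ {s : ℕ} (hs : 0 < s) (k m : ℕ) :
    ∫ x in (-1 : ℝ)..1, (x : ℂ) ^ m * fspline s (k + 1) x =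
      -((∫ x in (-1 : ℝ)..1, (x : ℂ) ^ (m + 1) * fspline s k x) -
        ∫ x in (-1 : ℝ)..1, (x : ℂ) ^ 0 * fspline s k x) / (m + 1) := by
  have hm : ((m : ℂ) + 1) ≠ 0 := by exact_mod_cast Nat.succ_ne_zero m
  have h := integral_mul_fspline_succ hs k
    (φ := fun x : ℝ => ((x : ℂ) ^ (m + 1) - 1) / (m + 1)) (φ' := fun x : ℝ => (x : ℂ) ^ m)
    (fun x => by
      have := ((((hasDerivAt_id x).ofReal_comp).pow (m + 1)).sub_const 1).div_const
        ((m : ℂ) + 1)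
      refine this.congr_deriv ?_
      push_cast
      field_simp
      simp)
    (by fun_prop)
  rw [h]
  have hi : ∀ n : ℕ, IntervalIntegrable (fun x : ℝ => (x : ℂ) ^ n * (fspline s k x : ℂ))
      volume (-1) 1 := fun n =>
    (intervalIntegrable_ofReal_fspline s k _ _).continuousOn_mul (by fun_prop)
  rw [← intervalIntegral.integral_sub (hi _) (hi _), neg_div,
    ← intervalIntegral.integral_div]
  simp only [Complex.ofReal_one, one_pow, sub_self, zero_div, zero_mul, zero_sub]
  congr 2
  ext x
  ring

/-- The perfect spline chain is orthogonal to polynomials of low degree. -/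
lemma integral_pow_mul_fspline_eq_zero {s : ℕ} (hs : 0 < s) (he : Even s) (k m : ℕ)
    (hkm : k + m + 2 ≤ s) :
    ∫ x in (-1 : ℝ)..1, (x : ℂ) ^ m * fspline s k x = 0 := by
  induction k generalizing m with
  | zero =>
    rw [integral_pow_mul_fspline_zero hs he, alternatingKnotSum_eq_zero]
    · simp
    · simp; omega
  | succ k ih =>
    rw [integral_pow_mul_fspline_succ hs, ih _ (by omega), ih _ (by omega)]; simp

lemma fspline_succ_one_eq_zero {s : ℕ} (he : Even s) {k : ℕ} (hk : k + 2 ≤ s) :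
    fspline s (k + 1) 1 = 0 := by
  have h := integral_pow_mul_fspline_eq_zero (by omega) he k 0 (by omega)
  simp only [pow_zero, one_mul] at h
  rw [intervalIntegral.integral_ofReal, Complex.ofReal_eq_zero] at h
  exact h

lemma integral_pow_mul_fspline_complement {s : ℕ} (hs : 0 < s) (he : Even s) (k m : ℕ)
    (hkm : k + m + 1 = s) :
    ∫ x in (-1 : ℝ)..1, (x : ℂ) ^ m * fspline s k x =
      (-1) ^ (k + 1) * m.factorial / (s - 1).factorial * (4 * (1 / 2) ^ s) := by
  induction k generalizing m with
  | zero =>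
    obtain rfl : s = m + 1 := by omega
    have hm : ((m : ℂ) + 1) ≠ 0 := by exact_mod_cast Nat.succ_ne_zero m
    have hf : (m.factorial : ℂ) ≠ 0 := by exact_mod_cast m.factorial_ne_zero
    rw [integral_pow_mul_fspline_zero hs he, alternatingKnotSum_self_zero hs he]
    push_cast
    field_simp
  | succ k ih =>
    have hm : ((m : ℂ) + 1) ≠ 0 := by exact_mod_cast Nat.succ_ne_zero m
    rw [integral_pow_mul_fspline_succ hs, ih _ (by omega),
      integral_pow_mul_fspline_eq_zero hs he k 0 (by omega), Nat.factorial_succ]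
    push_cast
    field_simp
    ring

lemma integral_fspline_top {s : ℕ} (hs : 0 < s) (he : Even s) :
    ∫ x in (-1 : ℝ)..1, (fspline s (s - 1) x : ℂ) =
      ((4 / (2 ^ s * (s - 1).factorial) : ℝ) : ℂ) := by
  have h := integral_pow_mul_fspline_complement hs he (s - 1) 0 (by omega)
  simp only [pow_zero, one_mul] at h
  rw [h, Nat.sub_add_cancel hs, he.neg_one_pow]
  push_cast
  simp
  field_simp

lemma fspline_one_splineKnot {s : ℕ} (hs : 2 ≤ s) (he : Even s) {j : ℕ} (hj : j ≤ s) :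
    fspline s 1 (splineKnot s j) =
      -((-1) ^ j * (Real.tan (π / (2 * s)) * Real.sin (j * π / s))) := by
  have hs0 : (0 : ℝ) < s := by positivity
  have hs2 : (2 : ℝ) ≤ s := by exact_mod_cast hs
  set α : ℝ := π / (2 * s) with hα
  have hα0 : 0 < α := by positivity
  have hα1 : α < π / 2 := by
    rw [hα, div_lt_div_iff₀ (by positivity) (by positivity)]; nlinarith [Real.pi_pos]
  have hcos : Real.cos α ≠ 0 := (Real.cos_pos_of_mem_Ioo ⟨by linarith, hα1⟩).ne'
  induction j with
  | zero => simp [splineKnot_zero, fspline_succ_neg_one]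
  | succ j ih =>
    have hle := splineKnot_le_succ (s := s) (j := j) (by omega)
    rw [fspline_one_sub_splineKnot (by omega) he (by omega) (Set.right_mem_Icc.2 hle),
      ih (by omega)]
    simp only [splineKnot]
    have e1 : (j : ℝ) * π / s = (2 * j * α + α) - α := by rw [hα]; field_simp; ring
    have e2 : ((j + 1 : ℕ) : ℝ) * π / s = (2 * j * α + α) + α := by
      rw [hα]; push_cast; field_simp; ring
    rw [e1, e2]
    generalize 2 * (j : ℝ) * α + α = γ
    rw [Real.cos_add _ α, Real.cos_sub _ α, Real.sin_add _ α, Real.sin_sub _ α,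
      Real.tan_eq_sin_div_cos, pow_succ]
    field_simp
    ring

lemma abs_fspline_one_le {s : ℕ} (hs : 2 ≤ s) (he : Even s) {x : ℝ}
    (hx : x ∈ Set.Icc (-1 : ℝ) 1) : |fspline s 1 x| ≤ Real.tan (π / (2 * s)) := by
  have hs2 : (2 : ℝ) ≤ s := by exact_mod_cast hs
  have htan : 0 ≤ Real.tan (π / (2 * s)) := by
    apply Real.tan_nonneg_of_nonneg_of_le_pi_div_two (by positivity)
    rw [div_le_div_iff₀ (by positivity) (by positivity)]; nlinarith [Real.pi_pos]
  have hsin : ∀ j ≤ s, 0 ≤ Real.sin (j * π / s) := fun j hj => by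
    apply Real.sin_nonneg_of_nonneg_of_le_pi (by positivity)
    have : (j : ℝ) ≤ s := by exact_mod_cast hj
    rw [div_le_iff₀ (by positivity)]; nlinarith [Real.pi_pos]
  have key : ∀ j ≤ s, ∀ x ∈ Set.Icc (-1 : ℝ) (splineKnot s j),
      |fspline s 1 x| ≤ Real.tan (π / (2 * s)) := by
    intro j
    induction j with
    | zero =>
      intro _ x hx
      rw [splineKnot_zero, Set.Icc_self, Set.mem_singleton_iff] at hx
      rwa [hx, fspline_succ_neg_one, abs_zero]
    | succ j ih =>
      intro hj x hx
      rcases le_total x (splineKnot s j) with h | h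
      · exact ih (by omega) x ⟨hx.1, h⟩
      have hle := splineKnot_le_succ (s := s) (j := j) (by omega)
      have h1 := fspline_one_sub_splineKnot (by omega) he hj ⟨h, hx.2⟩
      have h2 := fspline_one_sub_splineKnot (by omega) he hj (Set.right_mem_Icc.2 hle)
      rw [fspline_one_splineKnot hs he hj, fspline_one_splineKnot hs he (by omega : j ≤ s)] at h2
      rw [fspline_one_splineKnot hs he (by omega : j ≤ s)] at h1
      have b1 := mul_le_of_le_one_right htan (Real.sin_le_one (j * π / s))
      have b2 := mul_le_of_le_one_right htan (Real.sin_le_one ((j + 1 : ℕ) * π / s))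
      have b3 := mul_nonneg htan (hsin j (by omega))
      have b4 := mul_nonneg htan (hsin (j + 1) hj)
      have hx2 := hx.2
      rw [abs_le]
      rcases Nat.even_or_odd j with hp | hp
      · rw [hp.neg_one_pow] at h1 h2
        rw [hp.add_one.neg_one_pow] at h2
        constructor <;> linarith
      · rw [hp.neg_one_pow] at h1 h2
        rw [hp.add_one.neg_one_pow] at h2
        constructor <;> linarith
  exact key s le_rfl x (by rwa [splineKnot_self (by omega)])

lemma tan_pi_div_le {s : ℕ} (hs : 6 ≤ s) : Real.tan (π / (2 * s)) ≤ 2 / (s - 1) := by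
  have hs' : (6 : ℝ) ≤ s := by exact_mod_cast hs
  set α : ℝ := π / (2 * s) with hα
  have hα0 : 0 < α := by positivity
  have hα1 : α ≤ 0.27 := by
    rw [hα, div_le_iff₀ (by positivity)]; nlinarith [Real.pi_lt_d2]
  have hc := Real.one_sub_sq_div_two_le_cos (x := α)
  have hsin := Real.sin_lt hα0
  have hαs : α * s = π / 2 := by rw [hα]; field_simp
  have hcpos : 0 < Real.cos α := by nlinarith
  rw [Real.tan_eq_sin_div_cos, div_le_div_iff₀ hcpos (by linarith)]
  nlinarith [Real.pi_lt_d2]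

/-! ### Fourier transforms of the spline and of its first two moments -/

/-- The Fourier transform over `[-1, 1]` of `x ^ l * f_k x`. -/
noncomputable def splineFourier (s k l : ℕ) (ξ : ℝ) : ℂ :=
  ∫ x in (-1 : ℝ)..1, (x : ℂ) ^ l * Complex.exp (ξ * x * Complex.I) * fspline s k x

lemma norm_exp_mul_mul_I (ξ x : ℝ) : ‖Complex.exp (ξ * x * Complex.I)‖ = 1 := by
  rw [← Complex.ofReal_mul, Complex.norm_exp_ofReal_mul_I]

lemma hasDerivAt_exp_mul_mul_I (ξ x : ℝ) :
    HasDerivAt (fun x : ℝ => Complex.exp (ξ * x * Complex.I))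
      (Complex.exp (ξ * x * Complex.I) * (ξ * Complex.I)) x := by
  have h : HasDerivAt (fun x : ℝ => (ξ : ℂ) * x * Complex.I) (ξ * 1 * Complex.I) x :=
    (((hasDerivAt_id x).ofReal_comp).const_mul (ξ : ℂ)).mul_const Complex.I
  simpa using h.cexp

lemma norm_I_div (ξ : ℝ) : ‖Complex.I / ξ‖ = 1 / |ξ| := by simp

lemma splineFourier_succ {s : ℕ} (he : Even s) {k : ℕ} (hk : k + 2 ≤ s) (l : ℕ) {ξ : ℝ}
    (hξ : ξ ≠ 0) :
    splineFourier s (k + 1) l ξ = Complex.I / ξ *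
      (splineFourier s k l ξ + l * splineFourier s (k + 1) (l - 1) ξ) := by
  have hξ' : (ξ : ℂ) ≠ 0 := by exact_mod_cast hξ
  have hI : Complex.I ^ 2 = -1 := Complex.I_sq
  have h := integral_mul_fspline_succ (s := s) (by omega) k
    (φ := fun x : ℝ => -(Complex.I / ξ) * ((x : ℂ) ^ l * Complex.exp (ξ * x * Complex.I)))
    (φ' := fun x : ℝ => (x : ℂ) ^ l * Complex.exp (ξ * x * Complex.I) -
      Complex.I / ξ * (l * ((x : ℂ) ^ (l - 1) * Complex.exp (ξ * x * Complex.I))))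
    (fun x => by
      have hp : HasDerivAt (fun x : ℝ => (x : ℂ) ^ l) (l * (x : ℂ) ^ (l - 1)) x :=
        (((hasDerivAt_id x).ofReal_comp).pow l).congr_deriv (by simp)
      refine ((hp.mul (hasDerivAt_exp_mul_mul_I ξ x)).const_mul _).congr_deriv ?_
      field_simp
      linear_combination (-(x : ℂ) ^ l * ξ) * hI)
    (by fun_prop)
  rw [fspline_succ_one_eq_zero he hk] at h
  have hi : ∀ k n : ℕ, IntervalIntegrable
      (fun x : ℝ => (x : ℂ) ^ n * Complex.exp (ξ * x * Complex.I) * (fspline s k x : ℂ))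
      volume (-1) 1 := fun k n =>
    (intervalIntegrable_ofReal_fspline s k _ _).continuousOn_mul (by fun_prop)
  have h1 : ∫ x in (-1 : ℝ)..1, ((x : ℂ) ^ l * Complex.exp (ξ * x * Complex.I) -
      Complex.I / ξ * (l * ((x : ℂ) ^ (l - 1) * Complex.exp (ξ * x * Complex.I)))) *
        fspline s (k + 1) x = splineFourier s (k + 1) l ξ -
        Complex.I / ξ * l * splineFourier s (k + 1) (l - 1) ξ := by
    rw [splineFourier, splineFourier, ← intervalIntegral.integral_const_mul,
      ← intervalIntegral.integral_sub (hi _ _) ((hi _ _).const_mul _)]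
    congr 1
    ext x
    ring
  have h2 : ∫ x in (-1 : ℝ)..1,
      -(Complex.I / ξ) * ((x : ℂ) ^ l * Complex.exp (ξ * x * Complex.I)) * fspline s k x =
        -(Complex.I / ξ) * splineFourier s k l ξ := by
    rw [splineFourier, ← intervalIntegral.integral_const_mul]
    congr 1
    ext x
    ring
  rw [h1, h2] at h
  simp only [Complex.ofReal_zero, mul_zero] at h
  linear_combination h

lemma splineFourier_zero_eq {s : ℕ} (he : Even s) {k : ℕ} (hk : k + 1 ≤ s) {ξ : ℝ}
    (hξ : ξ ≠ 0) :
    splineFourier s k 0 ξ = (Complex.I / ξ) ^ k * splineFourier s 0 0 ξ := by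
  induction k with
  | zero => simp
  | succ k ih =>
    rw [splineFourier_succ he (by omega) 0 hξ, ih (by omega), pow_succ]
    push_cast; ring

lemma splineFourier_one_eq {s : ℕ} (he : Even s) {k : ℕ} (hk : k + 1 ≤ s) {ξ : ℝ}
    (hξ : ξ ≠ 0) :
    splineFourier s k 1 ξ = (Complex.I / ξ) ^ k *
      (splineFourier s 0 1 ξ + k * (Complex.I / ξ * splineFourier s 0 0 ξ)) := by
  induction k with
  | zero => simp
  | succ k ih =>
    have h := splineFourier_zero_eq he (k := k + 1) (by omega) hξ
    rw [splineFourier_succ he (by omega) 1 hξ, show 1 - 1 = 0 from rfl, h, ih (by omega), pow_succ]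
    push_cast; ring

lemma splineFourier_two_eq {s : ℕ} (he : Even s) {k : ℕ} (hk : k + 1 ≤ s) {ξ : ℝ}
    (hξ : ξ ≠ 0) :
    splineFourier s k 2 ξ = (Complex.I / ξ) ^ k * (splineFourier s 0 2 ξ + Complex.I / ξ *
      (2 * k * splineFourier s 0 1 ξ + k * (k + 1) * (Complex.I / ξ * splineFourier s 0 0 ξ))) := by
  induction k with
  | zero => simp
  | succ k ih =>
    have h := splineFourier_one_eq he (k := k + 1) (by omega) hξ
    rw [splineFourier_succ he (by omega) 2 hξ, show 2 - 1 = 1 from rfl, h, ih (by omega), pow_succ]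
    push_cast; ring

lemma norm_integral_mul_exp_le {φ φ' : ℝ → ℝ} (hφ : ∀ x, HasDerivAt φ (φ' x) x)
    (hφ' : Continuous φ') {a b ξ : ℝ} (hab : a ≤ b) (hξ : ξ ≠ 0)
    (ha : |φ a| ≤ 1) (hb : |φ b| ≤ 1) :
    ‖∫ x in a..b, (φ x : ℂ) * Complex.exp (ξ * x * Complex.I)‖ ≤
      1 / |ξ| * (2 + ∫ x in a..b, |φ' x|) := by
  have hξ' : (ξ : ℂ) ≠ 0 := by exact_mod_cast hξ
  have hI : Complex.I ^ 2 = -1 := Complex.I_sq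
  have h := intervalIntegral.integral_mul_deriv_eq_deriv_mul (a := a) (b := b)
    (u := fun x => (φ x : ℂ)) (u' := fun x => (φ' x : ℂ))
    (v := fun x : ℝ => -(Complex.I / ξ) * Complex.exp (ξ * x * Complex.I))
    (v' := fun x : ℝ => Complex.exp (ξ * x * Complex.I))
    (fun x _ => (hφ x).ofReal_comp)
    (fun x _ => by
      refine ((hasDerivAt_exp_mul_mul_I ξ x).const_mul _).congr_deriv ?_
      field_simp
      linear_combination (-1 : ℂ) * hI)
    ((Complex.continuous_ofReal.comp hφ').intervalIntegrable _ _)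
    (Continuous.intervalIntegrable (by fun_prop) _ _)
  have hv : ∀ x : ℝ, ‖-(Complex.I / ξ) * Complex.exp (ξ * x * Complex.I)‖ = 1 / |ξ| := fun x => by
    rw [norm_mul, norm_neg, norm_I_div, norm_exp_mul_mul_I, mul_one]
  have h3 : ‖∫ x in a..b, (φ' x : ℂ) * (-(Complex.I / ξ) * Complex.exp (ξ * x * Complex.I))‖ ≤
      1 / |ξ| * ∫ x in a..b, |φ' x| := by
    refine (intervalIntegral.norm_integral_le_integral_norm hab).trans (le_of_eq ?_)
    rw [← intervalIntegral.integral_const_mul]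
    congr 1
    ext x
    rw [norm_mul, hv, Complex.norm_real, Real.norm_eq_abs, mul_comm]
  have h1 : ‖(φ b : ℂ) * (-(Complex.I / ξ) * Complex.exp (ξ * b * Complex.I))‖ ≤ 1 / |ξ| := by
    rw [norm_mul, hv, Complex.norm_real, Real.norm_eq_abs]
    exact mul_le_of_le_one_left (by positivity) hb
  have h2 : ‖(φ a : ℂ) * (-(Complex.I / ξ) * Complex.exp (ξ * a * Complex.I))‖ ≤ 1 / |ξ| := by
    rw [norm_mul, hv, Complex.norm_real, Real.norm_eq_abs]
    exact mul_le_of_le_one_left (by positivity) ha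
  rw [h]
  refine (norm_sub_le _ _).trans ((add_le_add (norm_sub_le _ _) le_rfl).trans ?_)
  linarith

lemma norm_integral_mul_exp_mul_fspline_zero_le {s : ℕ} (hs : 0 < s) (he : Even s)
    {φ φ' : ℝ → ℝ} (hφ : ∀ x, HasDerivAt φ (φ' x) x) (hφ' : Continuous φ')
    (hb : ∀ x ∈ Set.Icc (-1 : ℝ) 1, |φ x| ≤ 1) {ξ : ℝ} (hξ : ξ ≠ 0) :
    ‖∫ x in (-1 : ℝ)..1, (φ x : ℂ) * Complex.exp (ξ * x * Complex.I) * fspline s 0 x‖ ≤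
      1 / |ξ| * (2 * s + ∫ x in (-1 : ℝ)..1, |φ' x|) := by
  have hφc : Continuous φ := continuous_iff_continuousAt.2 fun x => (hφ x).continuousAt
  rw [integral_mul_fspline_zero hs he (by fun_prop)]
  have hsum := intervalIntegral.sum_integral_adjacent_intervals (a := splineKnot s) (n := s)
    (f := fun x => |φ' x|) (μ := volume)
    (fun k _ => (hφ'.abs.intervalIntegrable _ _))
  rw [splineKnot_zero, splineKnot_self hs] at hsum
  have hconst : (2 : ℝ) * s = ∑ j ∈ Finset.range s, (2 : ℝ) := by simp [mul_comm]
  rw [← hsum, hconst, ← Finset.sum_add_distrib, Finset.mul_sum]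
  refine (norm_sum_le _ _).trans (Finset.sum_le_sum fun j hj => ?_)
  rw [norm_mul, norm_pow, norm_neg, norm_one, one_pow, one_mul]
  exact norm_integral_mul_exp_le hφ hφ' (splineKnot_le_succ (Finset.mem_range.1 hj)) hξ
    (hb _ (splineKnot_mem s j)) (hb _ (splineKnot_mem s _))

lemma integral_abs_symm : ∫ x in (-1 : ℝ)..1, |x| = 1 := by
  rw [← intervalIntegral.integral_add_adjacent_intervals (b := 0)
    (continuous_abs.intervalIntegrable _ _) (continuous_abs.intervalIntegrable _ _)]
  have h1 : ∫ x in (-1 : ℝ)..0, |x| = ∫ x in (-1 : ℝ)..0, -x :=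
    intervalIntegral.integral_congr_Ioo_of_le (by norm_num) fun x hx => abs_of_neg hx.2
  have h2 : ∫ x in (0 : ℝ)..1, |x| = ∫ x in (0 : ℝ)..1, x :=
    intervalIntegral.integral_congr_Ioo_of_le (by norm_num) fun x hx => abs_of_pos hx.1
  rw [h1, h2, intervalIntegral.integral_neg, integral_id, integral_id]
  norm_num

lemma norm_splineFourier_zero_zero_le {s : ℕ} (hs : 0 < s) (he : Even s) {ξ : ℝ}
    (hξ : ξ ≠ 0) : ‖splineFourier s 0 0 ξ‖ ≤ 1 / |ξ| * (2 * s) := by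
  have h := norm_integral_mul_exp_mul_fspline_zero_le hs he (φ := fun _ => 1) (φ' := fun _ => 0)
    (fun x => hasDerivAt_const x 1) continuous_const (by simp) hξ
  simpa [splineFourier] using h

lemma norm_splineFourier_zero_one_le {s : ℕ} (hs : 0 < s) (he : Even s) {ξ : ℝ}
    (hξ : ξ ≠ 0) : ‖splineFourier s 0 1 ξ‖ ≤ 1 / |ξ| * (2 * s + 2) := by
  have h := norm_integral_mul_exp_mul_fspline_zero_le hs he (φ := fun x => x) (φ' := fun _ => 1)
    (fun x => hasDerivAt_id x) continuous_const (fun x hx => abs_le.2 hx) hξ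
  have h2 : ∫ x in (-1 : ℝ)..1, |(1 : ℝ)| = 2 := by norm_num
  rw [h2] at h
  simpa only [splineFourier, pow_one] using h

lemma norm_splineFourier_zero_two_le {s : ℕ} (hs : 0 < s) (he : Even s) {ξ : ℝ}
    (hξ : ξ ≠ 0) : ‖splineFourier s 0 2 ξ‖ ≤ 1 / |ξ| * (2 * s + 2) := by
  have h := norm_integral_mul_exp_mul_fspline_zero_le hs he (φ := fun x => x ^ 2)
    (φ' := fun x => 2 * x)
    (fun x => by simpa using hasDerivAt_pow 2 x) (by fun_prop)
    (fun x hx => by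
      rw [abs_pow]; exact pow_le_one₀ (abs_nonneg x) (abs_le.2 hx)) hξ
  have h2 : ∫ x in (-1 : ℝ)..1, |2 * x| = 2 := by
    simp only [abs_mul, abs_two]
    rw [intervalIntegral.integral_const_mul, integral_abs_symm]; norm_num
  rw [h2] at h
  simpa only [splineFourier, Complex.ofReal_pow] using h

lemma norm_splineFourier_zero_zero_le_two (s : ℕ) (ξ : ℝ) : ‖splineFourier s 0 0 ξ‖ ≤ 2 := by
  have h := intervalIntegral.norm_integral_le_of_norm_le_const (a := (-1 : ℝ)) (b := 1) (C := 1)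
    (f := fun x : ℝ => (x : ℂ) ^ 0 * Complex.exp (ξ * x * Complex.I) * fspline s 0 x)
    (fun x _ => by
      rw [norm_mul, norm_mul, norm_exp_mul_mul_I, Complex.norm_real, Real.norm_eq_abs]
      simpa using abs_fspline_zero_le s x)
  refine h.trans (by norm_num)

lemma norm_splineFourier_zero_one_le_one (s : ℕ) (ξ : ℝ) : ‖splineFourier s 0 1 ξ‖ ≤ 1 := by
  rw [← integral_abs_symm]
  refine intervalIntegral.norm_integral_le_of_norm_le (by norm_num)
    (Filter.Eventually.of_forall fun x _ => ?_) (continuous_abs.intervalIntegrable _ _)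
  rw [norm_mul, norm_mul, norm_exp_mul_mul_I, Complex.norm_real, Real.norm_eq_abs, pow_one,
    Complex.norm_real, Real.norm_eq_abs, mul_one]
  exact mul_le_of_le_one_right (abs_nonneg x) (abs_fspline_zero_le s x)

lemma norm_I_div_mul_splineFourier_le {s : ℕ} (hs : 6 ≤ s) (he : Even s) {ξ : ℝ}
    (hξ : ξ ≠ 0) : ‖Complex.I / ξ * splineFourier s 0 0 ξ‖ ≤ 4 / (s - 1) := by
  have h1 := splineFourier_zero_eq he (k := 1) (by omega) hξ
  rw [pow_one] at h1
  rw [← h1]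
  have h := intervalIntegral.norm_integral_le_of_norm_le_const (a := (-1 : ℝ)) (b := 1)
    (C := 2 / (s - 1))
    (f := fun x : ℝ => (x : ℂ) ^ 0 * Complex.exp (ξ * x * Complex.I) * fspline s 1 x)
    (fun x hx => by
      rw [Set.uIoc_of_le (by norm_num)] at hx
      rw [norm_mul, norm_mul, norm_exp_mul_mul_I, Complex.norm_real, Real.norm_eq_abs]
      simpa using (abs_fspline_one_le (by omega) he ⟨hx.1.le, hx.2⟩).trans (tan_pi_div_le hs))
  refine h.trans (le_of_eq ?_)
  norm_num
  ring

/-- The Fourier transforms of the perfect spline and of its moments decay like `|ξ| ^ (-s)`. -/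
lemma norm_splineFourier_top_le {s : ℕ} (hs : 6 ≤ s) (he : Even s) {l : ℕ} (hl : l ≤ 2) {ξ : ℝ}
    (hξ : ξ ≠ 0) : ‖splineFourier s (s - 1) l ξ‖ ≤ 2 ^ l * (2 * s) / |ξ| ^ s := by
  have hs' : (6 : ℝ) ≤ s := by exact_mod_cast hs
  have hk : ((s - 1 : ℕ) : ℝ) = s - 1 := by rw [Nat.cast_sub (by omega)]; simp
  have hkn : ‖((s - 1 : ℕ) : ℂ)‖ = s - 1 := by rw [Complex.norm_natCast, hk]
  have hkn' : ‖((s - 1 : ℕ) : ℂ) + 1‖ = s := by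
    rw [← Nat.cast_add_one, Complex.norm_natCast]; push_cast; rw [hk]; ring
  set w := 1 / |ξ| with hw
  have hw0 : 0 < w := by positivity
  have hpow : 2 ^ l * (2 * (s : ℝ)) / |ξ| ^ s = w ^ (s - 1) * (w * (2 ^ l * (2 * s))) := by
    rw [← mul_assoc (w ^ (s - 1)), ← pow_succ w, Nat.sub_add_cancel (by omega), hw, div_pow, one_pow]; ring
  have hwn : ‖Complex.I / (ξ : ℂ)‖ = w := norm_I_div ξ
  rw [hpow]
  have hA := norm_splineFourier_zero_zero_le (by omega) he (s := s) hξ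
  have hA2 := norm_splineFourier_zero_zero_le_two s ξ
  have hB := norm_splineFourier_zero_one_le (by omega) he (s := s) hξ
  have hB2 := norm_splineFourier_zero_one_le_one s ξ
  have hC := norm_splineFourier_zero_two_le (by omega) he (s := s) hξ
  have hA1 := norm_I_div_mul_splineFourier_le hs he hξ
  rw [← hw] at hA hB hC
  interval_cases l
  · rw [splineFourier_zero_eq he (by omega) hξ, norm_mul, norm_pow, hwn]
    gcongr
    simpa using hA
  · rw [splineFourier_one_eq he (by omega) hξ, norm_mul, norm_pow, hwn]
    gcongr
    refine (norm_add_le _ _).trans ?_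
    rw [norm_mul, norm_mul, hkn, hwn]
    have : (s - 1) * (w * ‖splineFourier s 0 0 ξ‖) ≤ (s - 1) * (w * 2) := by
      gcongr; linarith
    linarith
  · rw [splineFourier_two_eq he (by omega) hξ, norm_mul, norm_pow, hwn]
    gcongr
    refine (norm_add_le _ _).trans ?_
    rw [norm_mul, hwn]
    have h1 : ‖2 * ((s - 1 : ℕ) : ℂ) * splineFourier s 0 1 ξ‖ ≤ 2 * (s - 1) * 1 := by
      rw [norm_mul, norm_mul, hkn, Complex.norm_ofNat]
      gcongr
      linarith
    have h2 : ‖((s - 1 : ℕ) : ℂ) * (((s - 1 : ℕ) : ℂ) + 1) *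
        (Complex.I / ξ * splineFourier s 0 0 ξ)‖ ≤ 4 * s := by
      rw [norm_mul, norm_mul, hkn, hkn']
      have : (s - 1) * s * (4 / ((s : ℝ) - 1)) = 4 * s := by
        have : (s : ℝ) - 1 ≠ 0 := by linarith
        field_simp
      rw [← this]
      gcongr
      nlinarith
    have h3 := mul_le_mul_of_nonneg_left ((norm_add_le _ _).trans (add_le_add h1 h2)) hw0.le
    linarith

/-! ### Poisson summation -/

open scoped FourierTransform in
lemma fourier_comp_div_mul_exp {F : ℝ → ℂ} (h0 : ∀ x, 1 ≤ |x| → F x = 0) {M : ℝ} (hM : 0 < M)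
    (t w : ℝ) :
    𝓕 (fun u : ℝ => F (u / M) * Complex.exp (u * t * Complex.I)) w =
      M * ∫ x in (-1 : ℝ)..1, F x * Complex.exp ((M * (t - 2 * π * w) : ℝ) * x * Complex.I) := by
  rw [Real.fourier_real_eq_integral_exp_smul]
  have hsub : Function.support (fun v : ℝ => Complex.exp (↑(-2 * π * v * w) * Complex.I) •
      (F (v / M) * Complex.exp (v * t * Complex.I))) ⊆ Set.Ioc (-M) M := by
    intro v hv
    by_contra hv'
    refine hv ?_
    have : 1 ≤ |v / M| := by
      rw [abs_div, abs_of_pos hM, le_div_iff₀ hM, one_mul]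
      by_contra! h
      exact hv' ⟨(abs_lt.1 h).1, (abs_lt.1 h).2.le⟩
    simp [h0 _ this]
  rw [← intervalIntegral.integral_eq_integral_of_support_subset hsub]
  have hc := intervalIntegral.integral_comp_div (a := -M) (b := M) (c := M)
    (fun x : ℝ => F x * Complex.exp ((M * (t - 2 * π * w) : ℝ) * x * Complex.I)) hM.ne'
  rw [neg_div, div_self hM.ne', Complex.real_smul] at hc
  rw [← hc]
  have hM' : (M : ℂ) ≠ 0 := by exact_mod_cast hM.ne'
  refine intervalIntegral.integral_congr fun v _ => ?_
  simp only [smul_eq_mul]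
  rw [mul_left_comm, ← Complex.exp_add]
  congr 2
  push_cast
  field_simp
  ring

/-- Poisson summation for a continuous function supported in `[-1, 1]`, sampled at the multiples
of `1 / (N + 1)`. -/
lemma sum_Icc_mul_exp_eq_tsum {F : ℝ → ℂ} (hF : Continuous F) (h0 : ∀ x, 1 ≤ |x| → F x = 0)
    (N : ℕ) (t : ℝ)
    (hsum : Summable fun m : ℤ => ∫ x in (-1 : ℝ)..1,
      F x * Complex.exp ((((N : ℝ) + 1) * (t + 2 * π * m) : ℝ) * x * Complex.I)) :
    ∑ k ∈ Finset.Icc (-(N : ℤ)) N,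
        F ((k : ℝ) / ((N : ℝ) + 1)) * Complex.exp (k * t * Complex.I) =
      ((N : ℝ) + 1 : ℝ) * ∑' m : ℤ, ∫ x in (-1 : ℝ)..1,
        F x * Complex.exp ((((N : ℝ) + 1) * (t + 2 * π * m) : ℝ) * x * Complex.I) := by
  set M : ℝ := (N : ℝ) + 1 with hMdef
  have hM : 0 < M := by positivity
  set f : ℝ → ℂ := fun u => F (u / M) * Complex.exp (u * t * Complex.I) with hf
  have hfc : Continuous f := by fun_prop
  have hfz : ∀ u, M ≤ |u| → f u = 0 := fun u hu => by
    simp only [hf]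
    rw [h0, zero_mul]
    rwa [abs_div, abs_of_pos hM, le_div_iff₀ hM, one_mul]
  have hcs : HasCompactSupport f := HasCompactSupport.intro (K := Set.Icc (-M) M) isCompact_Icc
    fun u hu => hfz u (by
      by_contra! h
      exact hu ⟨(abs_lt.1 h).1.le, (abs_lt.1 h).2.le⟩)
  have hO : f =O[Filter.cocompact ℝ] fun x => |x| ^ (-(2 : ℝ)) := by
    rw [hasCompactSupport_iff_eventuallyEq, Filter.coclosedCompact_eq_cocompact] at hcs
    exact hcs.trans_isBigO (Asymptotics.isBigO_zero _ _)
  have hFour : ∀ m : ℤ, FourierTransform.fourier f (m : ℝ) = M * ∫ x in (-1 : ℝ)..1,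
      F x * Complex.exp ((M * (t + 2 * π * (-m : ℤ)) : ℝ) * x * Complex.I) := fun m => by
    rw [fourier_comp_div_mul_exp h0 hM]
    push_cast
    simp only [mul_neg, ← sub_eq_add_neg]
  have hs : Summable fun m : ℤ => FourierTransform.fourier f (m : ℝ) := by
    simp only [hFour]
    exact ((Equiv.neg ℤ).summable_iff.2 hsum).mul_left _
  have hP := Real.tsum_eq_tsum_fourier_of_rpow_decay_of_summable hfc one_lt_two hO hs 0
  simp only [zero_add, fourier_coe_apply, Complex.ofReal_zero, mul_zero, zero_div,
    Complex.exp_zero, mul_one, hFour, tsum_mul_left] at hP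
  rw [← (Equiv.neg ℤ).tsum_eq]
  simp only [Equiv.neg_apply]
  rw [← hP, tsum_eq_sum (s := Finset.Icc (-(N : ℤ)) N)]
  · simp [hf]
  · intro k hk
    refine hfz _ ?_
    rw [Finset.mem_Icc, ← abs_le, not_le] at hk
    have : (N : ℤ) + 1 ≤ |k| := hk
    rw [hMdef]
    exact_mod_cast this

/-- The sampled exponential sums of the spline and of its moments. -/
noncomputable def splineSum (s N l : ℕ) (t : ℝ) : ℂ :=
  ∑ k ∈ Finset.Icc (-(N : ℤ)) N, ((k : ℂ) / ((N : ℂ) + 1)) ^ l *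
    gtilde s ((k : ℝ) / (2 * ((N : ℝ) + 1))) * Complex.exp (k * t * Complex.I)

lemma splineSum_eq_tsum {s : ℕ} (hs : 6 ≤ s) (he : Even s) (N l : ℕ) (t : ℝ)
    (hsum : Summable fun m : ℤ =>
      splineFourier s (s - 1) l (((N : ℝ) + 1) * (t + 2 * π * m))) :
    splineSum s N l t = ((N : ℝ) + 1 : ℝ) *
      ∑' m : ℤ, splineFourier s (s - 1) l (((N : ℝ) + 1) * (t + 2 * π * m)) := by
  obtain ⟨r, rfl⟩ : ∃ r, s = r + 2 := ⟨s - 2, by omega⟩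
  simp only [show r + 2 - 1 = r + 1 by omega] at hsum ⊢
  set F : ℝ → ℂ := fun x => (x : ℂ) ^ l * fspline (r + 2) (r + 1) (max (-1) (min 1 x)) with hFdef
  have hF : Continuous F := by
    have := (continuous_fspline_succ (r + 2) r).comp
      (f := fun x : ℝ => max (-1) (min 1 x)) (by fun_prop)
    exact (by fun_prop : Continuous fun x : ℝ => (x : ℂ) ^ l).mul
      (Complex.continuous_ofReal.comp this)
  have h0 : ∀ x, 1 ≤ |x| → F x = 0 := by
    intro x hx
    rcases le_abs.1 hx with h | h
    · simp [hFdef, min_eq_left h, fspline_succ_one_eq_zero he le_rfl]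
    · rw [hFdef]
      simp only
      rw [min_eq_right (by linarith), max_eq_left (by linarith), fspline_succ_neg_one]
      simp
  have hmid : ∀ x, |x| ≤ 1 → F x = (x : ℂ) ^ l * fspline (r + 2) (r + 1) x := by
    intro x hx
    rw [abs_le] at hx
    simp only [hFdef]
    rw [min_eq_right hx.2, max_eq_right hx.1]
  have hint : ∀ ξ : ℝ, ∫ x in (-1 : ℝ)..1, F x * Complex.exp (ξ * x * Complex.I) =
      splineFourier (r + 2) (r + 1) l ξ := by
    intro ξ
    refine intervalIntegral.integral_congr fun x hx => ?_
    rw [Set.uIcc_of_le (by norm_num)] at hx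
    rw [hmid x (abs_le.2 hx)]
    ring
  have hP := sum_Icc_mul_exp_eq_tsum hF h0 N t (by simpa only [hint] using hsum)
  simp only [hint] at hP
  rw [← hP, splineSum]
  refine Finset.sum_congr rfl fun k hk => ?_
  have hM : (0 : ℝ) < (N : ℝ) + 1 := by positivity
  rw [hmid, gtilde]
  · rw [show 2 * ((k : ℝ) / (2 * ((N : ℝ) + 1))) = k / ((N : ℝ) + 1) by field_simp]
    push_cast
    rfl
  · rw [Finset.mem_Icc, ← abs_le] at hk
    rw [abs_div, abs_of_pos hM, div_le_one hM]
    have : ((|k| : ℤ) : ℝ) ≤ (N : ℤ) := by exact_mod_cast hk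
    push_cast at this
    linarith

lemma hasSum_one_div_add_one_sq : HasSum (fun n : ℕ => 1 / ((n : ℝ) + 1) ^ 2) (π ^ 2 / 6) := by
  have := (hasSum_nat_add_iff' 1).2 hasSum_zeta_two
  simpa using this

lemma exists_hasSum_one_div_two_mul_add_one_pow {s : ℕ} (hs : 6 ≤ s) :
    ∃ z : ℝ, HasSum (fun n : ℕ => 1 / (2 * (n : ℝ) + 1) ^ s) z ∧ z ≤ 1.006 := by
  have hle : ∀ n : ℕ, 1 / (2 * ((n + 1 : ℕ) : ℝ) + 1) ^ s ≤ 1 / 324 * (1 / ((n : ℝ) + 1) ^ 2) := by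
    intro n
    have hn : (0 : ℝ) ≤ n := n.cast_nonneg
    rw [one_div_mul_one_div]
    push_cast
    gcongr
    calc (324 : ℝ) * ((n : ℝ) + 1) ^ 2 = 3 ^ 4 * (2 * ((n : ℝ) + 1)) ^ 2 := by ring
      _ ≤ (2 * ((n : ℝ) + 1) + 1) ^ 4 * (2 * ((n : ℝ) + 1) + 1) ^ 2 := by gcongr <;> linarith
      _ = (2 * ((n : ℝ) + 1) + 1) ^ 6 := by ring
      _ ≤ _ := pow_le_pow_right₀ (by linarith) hs
  have hz := hasSum_one_div_add_one_sq.mul_left (1 / 324 : ℝ)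
  have hsm : Summable fun n : ℕ => 1 / (2 * ((n + 1 : ℕ) : ℝ) + 1) ^ s :=
    Summable.of_nonneg_of_le (fun n => by positivity) hle hz.summable
  have h1 := (hasSum_nat_add_iff (f := fun n : ℕ => 1 / (2 * (n : ℝ) + 1) ^ s) 1).1 hsm.hasSum
  refine ⟨_, h1, ?_⟩
  have h2 := hasSum_le hle hsm.hasSum hz
  have h3 : π ^ 2 ≤ 3.15 ^ 2 := by gcongr; exact Real.pi_lt_d2.le
  simp only [Finset.sum_range_one, Nat.cast_zero, mul_zero, zero_add, one_pow]
  norm_num at h3 h2 ⊢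
  linarith

lemma norm_splineSum_le {s : ℕ} (hs : 6 ≤ s) (he : Even s) (N : ℕ) {l : ℕ} (hl : l ≤ 2) {t : ℝ}
    (ht : 0 < t) (htπ : t ≤ π) :
    ‖splineSum s N l t‖ ≤
      ((N : ℝ) + 1) * (2.012 * (2 ^ l * (2 * s)) / (((N : ℝ) + 1) * t) ^ s) := by
  set M : ℝ := (N : ℝ) + 1 with hMdef
  have hM : 0 < M := by positivity
  obtain ⟨z, hz, hz'⟩ := exists_hasSum_one_div_two_mul_add_one_pow hs
  set C : ℝ := 2 ^ l * (2 * s) / (M * t) ^ s with hC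
  have hC0 : 0 ≤ C := by positivity
  have key : ∀ (n : ℕ) (u : ℝ), (2 * (n : ℝ) + 1) * t ≤ |u| →
      ‖splineFourier s (s - 1) l (M * u)‖ ≤ C * (1 / (2 * (n : ℝ) + 1) ^ s) := by
    intro n u hu
    have hpos : 0 < (2 * (n : ℝ) + 1) * t := by positivity
    have hu0 : u ≠ 0 := abs_pos.1 (hpos.trans_le hu)
    refine (norm_splineFourier_top_le hs he hl (mul_ne_zero hM.ne' hu0)).trans ?_
    rw [hC, div_mul_div_comm, mul_one, ← mul_pow, abs_mul, abs_of_pos hM, mul_assoc M,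
      mul_comm t]
    gcongr
  have hz2 := hz.mul_left C
  have h1 : ∀ n : ℕ, ‖splineFourier s (s - 1) l (M * (t + 2 * π * (n : ℤ)))‖ ≤
      C * (1 / (2 * (n : ℝ) + 1) ^ s) := fun n => key n _ (by
    refine le_trans ?_ (le_abs_self _)
    have : (n : ℝ) * t ≤ n * π := by gcongr
    push_cast
    linarith)
  have h2 : ∀ n : ℕ, ‖splineFourier s (s - 1) l (M * (t + 2 * π * (-((n : ℤ) + 1) : ℤ)))‖ ≤
      C * (1 / (2 * (n : ℝ) + 1) ^ s) := fun n => key n _ (by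
    refine le_trans ?_ (neg_le_abs _)
    have : (n : ℝ) * t ≤ n * π := by gcongr
    push_cast
    linarith)
  have hs1 := Summable.of_norm_bounded hz2.summable h1
  have hs2 := Summable.of_norm_bounded hz2.summable h2
  have hsm := Summable.of_nat_of_neg_add_one
    (f := fun m : ℤ => splineFourier s (s - 1) l (M * (t + 2 * π * m))) hs1 hs2
  rw [splineSum_eq_tsum hs he N l t hsm, norm_mul, Complex.norm_real, Real.norm_eq_abs,
    abs_of_pos hM]
  gcongr
  rw [tsum_of_nat_of_neg_add_one
    (f := fun m : ℤ => splineFourier s (s - 1) l (M * (t + 2 * π * m))) hs1 hs2]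
  refine (norm_add_le _ _).trans ((add_le_add (tsum_of_norm_bounded hz2 h1)
    (tsum_of_norm_bounded hz2 h2)).trans ?_)
  have : C * z ≤ C * 1.006 := by gcongr
  rw [mul_div_assoc, ← hC]
  linarith

lemma splineFourier_top_zero {s : ℕ} (hs : 0 < s) (he : Even s) :
    splineFourier s (s - 1) 0 0 = ((4 / (2 ^ s * (s - 1).factorial) : ℝ) : ℂ) := by
  rw [← integral_fspline_top hs he, splineFourier]
  simp

lemma splineSum_zero_zero (s N : ℕ) : splineSum s N 0 0 = (gnorm s N : ℂ) := by
  simp [splineSum, gnorm]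

lemma le_gnorm {s N : ℕ} (hs : 6 ≤ s) (he : Even s) (hN : 2 * s ≤ N) :
    0.995 * (((N : ℝ) + 1) * (4 / (2 ^ s * (s - 1).factorial))) ≤ gnorm s N := by
  set M : ℝ := (N : ℝ) + 1 with hMdef
  have hM : 0 < M := by positivity
  set C : ℝ := 2 * s / (2 * π * M) ^ s with hC
  have hC0 : 0 ≤ C := by positivity
  have key : ∀ (n : ℕ) (u : ℝ), |u| = 2 * π * (n + 1) →
      ‖splineFourier s (s - 1) 0 (M * u)‖ ≤ C * (1 / ((n : ℝ) + 1) ^ 2) := by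
    intro n u hu
    have hpos : 0 < 2 * π * ((n : ℝ) + 1) := by positivity
    have hu0 : u ≠ 0 := abs_pos.1 (hu ▸ hpos)
    refine (norm_splineFourier_top_le hs he (by norm_num) (mul_ne_zero hM.ne' hu0)).trans ?_
    rw [abs_mul, abs_of_pos hM, hu, pow_zero, one_mul, hC, div_mul_div_comm, mul_one,
      show M * (2 * π * ((n : ℝ) + 1)) = 2 * π * M * (n + 1) by ring, mul_pow]
    gcongr
    · linarith [n.cast_nonneg (α := ℝ)]
    · omega
  have hz2 := hasSum_one_div_add_one_sq.mul_left C
  have h1 : ∀ n : ℕ, ‖splineFourier s (s - 1) 0 (M * (0 + 2 * π * ((n : ℤ) + 1 : ℤ)))‖ ≤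
      C * (1 / ((n : ℝ) + 1) ^ 2) := fun n => key n _ (by
    push_cast
    rw [zero_add, abs_of_nonneg (by positivity)])
  have h2 : ∀ n : ℕ, ‖splineFourier s (s - 1) 0 (M * (0 + 2 * π * (-((n : ℤ) + 1) : ℤ)))‖ ≤
      C * (1 / ((n : ℝ) + 1) ^ 2) := fun n => key n _ (by
    push_cast
    rw [zero_add, mul_neg, abs_neg, abs_of_nonneg (by positivity)])
  have hs1 := Summable.of_norm_bounded hz2.summable h1
  have hs2 := Summable.of_norm_bounded hz2.summable h2
  have hsm := Summable.of_add_one_of_neg_add_one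
    (f := fun m : ℤ => splineFourier s (s - 1) 0 (M * (0 + 2 * π * m))) hs1 hs2
  have hg := splineSum_eq_tsum hs he N 0 0 hsm
  rw [tsum_of_add_one_of_neg_add_one
    (f := fun m : ℤ => splineFourier s (s - 1) 0 (M * (0 + 2 * π * m))) hs1 hs2,
    splineSum_zero_zero] at hg
  simp only [Int.cast_zero, mul_zero, add_zero] at hg
  rw [splineFourier_top_zero (by omega) he] at hg
  rw [← hMdef] at hg
  set I : ℝ := 4 / (2 ^ s * (s - 1).factorial) with hI
  have hdiff : |gnorm s N - M * I| ≤ M * (C * (π ^ 2 / 6) + C * (π ^ 2 / 6)) := by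
    rw [← Real.norm_eq_abs, ← Complex.norm_real, Complex.ofReal_sub, hg]
    refine le_trans (le_of_eq ?_) (mul_le_mul_of_nonneg_left ((norm_add_le _ _).trans
      (add_le_add (tsum_of_norm_bounded hz2 h1) (tsum_of_norm_bounded hz2 h2))) hM.le)
    rw [← Real.norm_of_nonneg hM.le, ← Complex.norm_real, ← norm_mul, Complex.norm_real,
      Real.norm_of_nonneg hM.le]
    congr 1
    push_cast
    ring
  have hsmall : C * (π ^ 2 / 6) + C * (π ^ 2 / 6) ≤ 0.005 * I := by
    have hπ : π ^ 2 ≤ 3.15 ^ 2 := by gcongr; exact Real.pi_lt_d2.le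
    have hCI : 800 * C ≤ I := by
      rw [hC, hI, ← mul_div_assoc, div_le_div_iff₀ (by positivity) (by positivity)]
      have hfac : (s : ℝ) * (s - 1).factorial ≤ (s : ℝ) ^ s := by
        have := Nat.factorial_le_pow s
        rw [← Nat.mul_factorial_pred (by omega)] at this
        exact_mod_cast this
      have hMs : 2 * (s : ℝ) ≤ M := by
        have : (2 * s : ℝ) ≤ N := by exact_mod_cast hN
        linarith
      have hpow : (400 : ℝ) * (s : ℝ) ^ s ≤ (π * M) ^ s := by
        calc (400 : ℝ) * (s : ℝ) ^ s ≤ 6 ^ 6 * (s : ℝ) ^ s := by gcongr; norm_num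
          _ ≤ 6 ^ s * (s : ℝ) ^ s := by gcongr; norm_num
          _ = (3 * (2 * s)) ^ s := by rw [← mul_pow]; ring
          _ ≤ (π * M) ^ s := by gcongr; exact Real.pi_gt_three.le
      rw [show 2 * π * M = 2 * (π * M) by ring, mul_pow]
      calc 800 * (2 * (s : ℝ)) * (2 ^ s * (s - 1).factorial)
          = 4 * (2 ^ s * (400 * (s * (s - 1).factorial))) := by ring
        _ ≤ 4 * (2 ^ s * (400 * (s : ℝ) ^ s)) := by gcongr
        _ ≤ 4 * (2 ^ s * (π * M) ^ s) := by gcongr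
    have : C * π ^ 2 ≤ C * 3.15 ^ 2 := by gcongr
    norm_num at this ⊢
    linarith
  have := (abs_le.1 hdiff).1
  have hb := mul_le_mul_of_nonneg_left hsmall hM.le
  norm_num at hb ⊢
  linarith

/-! ### The trigonometric kernel and its derivatives -/

lemma hasDerivAt_splineSum (s N l : ℕ) (t : ℝ) :
    HasDerivAt (splineSum s N l) (((N : ℂ) + 1) * Complex.I * splineSum s N (l + 1) t) t := by
  have hM : (N : ℂ) + 1 ≠ 0 := by exact_mod_cast N.succ_ne_zero
  have h := HasDerivAt.fun_sum (u := Finset.Icc (-(N : ℤ)) N) fun k _ =>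
    (hasDerivAt_exp_mul_mul_I k t).const_mul (((k : ℂ) / ((N : ℂ) + 1)) ^ l *
      gtilde s ((k : ℝ) / (2 * ((N : ℝ) + 1))))
  simp only [Complex.ofReal_intCast] at h
  refine h.congr_deriv ?_
  rw [splineSum, Finset.mul_sum]
  refine Finset.sum_congr rfl fun k _ => ?_
  rw [pow_succ]
  field_simp

lemma sigmaT_eq (s N : ℕ) (t : ℝ) : sigmaT s N t = (splineSum s N 0 t).re / gnorm s N := by
  have h : sigmaT s N t = (1 / (gnorm s N : ℂ) * splineSum s N 0 t).re := by
    simp [sigmaT, splineSum]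
  rw [h, ← Complex.ofReal_one, ← Complex.ofReal_div, Complex.re_ofReal_mul]
  ring

lemma hasDerivAt_re {f : ℝ → ℂ} {f' : ℂ} {t : ℝ} (h : HasDerivAt f f' t) :
    HasDerivAt (fun t => (f t).re) f'.re t :=
  Complex.reCLM.hasFDerivAt.comp_hasDerivAt t h

lemma hasDerivAt_sigmaT (s N : ℕ) (t : ℝ) :
    HasDerivAt (sigmaT s N)
      ((((N : ℂ) + 1) * Complex.I * splineSum s N 1 t).re / gnorm s N) t := by
  rw [show sigmaT s N = fun t => (splineSum s N 0 t).re / gnorm s N from funext (sigmaT_eq s N)]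
  exact (hasDerivAt_re (hasDerivAt_splineSum s N 0 t)).div_const _

lemma hasDerivAt_deriv_sigmaT (s N : ℕ) (t : ℝ) :
    HasDerivAt (deriv (sigmaT s N))
      ((((N : ℂ) + 1) * Complex.I * (((N : ℂ) + 1) * Complex.I * splineSum s N 2 t)).re /
        gnorm s N) t := by
  rw [show deriv (sigmaT s N) = _ from funext fun t => (hasDerivAt_sigmaT s N t).deriv]
  exact (hasDerivAt_re ((hasDerivAt_splineSum s N 1 t).const_mul _)).div_const _

/-- The common factor in the bounds on the derivatives of the trigonometric kernel. -/
noncomputable def kernelDecay (s N : ℕ) (t : ℝ) : ℝ :=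
  1.02 * (s - 1).factorial * 2 ^ s * s / (((N : ℝ) + 1) * t) ^ s

lemma norm_splineSum_div_gnorm_le {s N : ℕ} (hs : 6 ≤ s) (he : Even s) (hN : 2 * s ≤ N)
    {l : ℕ} (hl : l ≤ 2) {t : ℝ} (ht : 0 < t) (htπ : t ≤ π) :
    ‖splineSum s N l t‖ / gnorm s N ≤ 2 ^ l * kernelDecay s N t := by
  have hg := le_gnorm hs he hN
  have hS := norm_splineSum_le hs he N hl ht htπ
  rw [kernelDecay]
  set M : ℝ := (N : ℝ) + 1 with hMdef
  have hM : 0 < M := by positivity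
  have hI : 0 < 0.995 * (M * (4 / (2 ^ s * ((s - 1).factorial : ℝ)))) := by positivity
  rw [div_le_iff₀ (hI.trans_le hg)]
  refine hS.trans (le_trans ?_ (mul_le_mul_of_nonneg_left hg (by positivity)))
  have hs0 : (0 : ℝ) < s := by exact_mod_cast (by omega : 0 < s)
  have hR : 2 ^ l * (1.02 * ((s - 1).factorial : ℝ) * 2 ^ s * s / (M * t) ^ s) *
      (0.995 * (M * (4 / (2 ^ s * ((s - 1).factorial : ℝ))))) =
      M * (4.0596 * (2 ^ l * s) / (M * t) ^ s) := by
    field_simp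
    norm_num
  rw [hR]
  refine mul_le_mul_of_nonneg_left (div_le_div_of_nonneg_right ?_ (by positivity)) hM.le
  have : (0 : ℝ) < 2 ^ l * s := by positivity
  linarith

lemma kernelDecay_nonneg (s N : ℕ) {t : ℝ} (ht : 0 < t) : 0 ≤ kernelDecay s N t := by
  rw [kernelDecay]; positivity

lemma abs_deriv_sigmaT_le {s N : ℕ} (hs : 6 ≤ s) (he : Even s) (hN : 2 * s ≤ N)
    {t : ℝ} (ht : 0 < t) (htπ : t ≤ π) :
    |deriv (sigmaT s N) t| ≤ 2 * (((N : ℝ) + 1) * kernelDecay s N t) := by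
  have hg : 0 ≤ gnorm s N := le_trans (by positivity) (le_gnorm hs he hN)
  rw [(hasDerivAt_sigmaT s N t).deriv, abs_div, abs_of_nonneg hg]
  have h := norm_splineSum_div_gnorm_le hs he hN one_le_two ht htπ
  have hn : ‖(N : ℂ) + 1‖ = (N : ℝ) + 1 := by
    rw [← Nat.cast_add_one, Complex.norm_natCast]; push_cast; rfl
  calc _ ≤ ‖((N : ℂ) + 1) * Complex.I * splineSum s N 1 t‖ / gnorm s N := by
        gcongr; exact Complex.abs_re_le_norm _
    _ = ((N : ℝ) + 1) * (‖splineSum s N 1 t‖ / gnorm s N) := by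
        rw [norm_mul, norm_mul, hn, Complex.norm_I]; ring
    _ ≤ ((N : ℝ) + 1) * (2 ^ 1 * kernelDecay s N t) := by gcongr
    _ = _ := by ring

lemma abs_deriv_deriv_sigmaT_le {s N : ℕ} (hs : 6 ≤ s) (he : Even s) (hN : 2 * s ≤ N)
    {t : ℝ} (ht : 0 < t) (htπ : t ≤ π) :
    |deriv (deriv (sigmaT s N)) t| ≤ 4 * (((N : ℝ) + 1) ^ 2 * kernelDecay s N t) := by
  have hg : 0 ≤ gnorm s N := le_trans (by positivity) (le_gnorm hs he hN)
  rw [(hasDerivAt_deriv_sigmaT s N t).deriv, abs_div, abs_of_nonneg hg]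
  have h := norm_splineSum_div_gnorm_le hs he hN le_rfl ht htπ
  have hn : ‖(N : ℂ) + 1‖ = (N : ℝ) + 1 := by
    rw [← Nat.cast_add_one, Complex.norm_natCast]; push_cast; rfl
  calc _ ≤ ‖((N : ℂ) + 1) * Complex.I * (((N : ℂ) + 1) * Complex.I * splineSum s N 2 t)‖ /
        gnorm s N := by
        gcongr; exact Complex.abs_re_le_norm _
    _ = ((N : ℝ) + 1) ^ 2 * (‖splineSum s N 2 t‖ / gnorm s N) := by
        rw [norm_mul, norm_mul, norm_mul, norm_mul, hn, Complex.norm_I]; ring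
    _ ≤ ((N : ℝ) + 1) ^ 2 * (2 ^ 2 * kernelDecay s N t) := by gcongr
    _ = _ := by ring

/-- The trigonometric kernel as a polynomial in `cos t`. -/
noncomputable def kernelPoly (s N : ℕ) : Polynomial ℝ :=
  ∑ k ∈ Finset.Icc (-(N : ℤ)) N, Polynomial.C (gtilde s ((k : ℝ) / (2 * ((N : ℝ) + 1))) /
    gnorm s N) * Polynomial.Chebyshev.T ℝ k

lemma sigmaT_eq_eval_cos (s N : ℕ) (t : ℝ) :
    sigmaT s N t = (kernelPoly s N).eval (Real.cos t) := by
  rw [sigmaT_eq, splineSum, kernelPoly, Complex.re_sum, Polynomial.eval_finsetSum,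
    Finset.sum_div]
  refine Finset.sum_congr rfl fun k _ => ?_
  have hre : (Complex.exp (k * t * Complex.I)).re = Real.cos (k * t) := by
    rw [← Complex.exp_ofReal_mul_I_re]; push_cast; rfl
  rw [pow_zero, one_mul, Complex.re_ofReal_mul, hre, Polynomial.eval_mul, Polynomial.eval_C,
    Polynomial.Chebyshev.T_real_cos]
  ring

lemma deriv_sigmaT_eq (s N : ℕ) (t : ℝ) :
    deriv (sigmaT s N) t = -(Real.sin t * (kernelPoly s N).derivative.eval (Real.cos t)) := by
  rw [show sigmaT s N = _ from funext (sigmaT_eq_eval_cos s N)]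
  have h := ((kernelPoly s N).hasDerivAt (Real.cos t)).comp t (Real.hasDerivAt_cos t)
  exact h.deriv.trans (by ring)

lemma deriv_deriv_sigmaT_eq (s N : ℕ) (t : ℝ) :
    deriv (deriv (sigmaT s N)) t =
      Real.sin t ^ 2 * (kernelPoly s N).derivative.derivative.eval (Real.cos t) -
        Real.cos t * (kernelPoly s N).derivative.eval (Real.cos t) := by
  rw [show deriv (sigmaT s N) = _ from funext (deriv_sigmaT_eq s N)]
  have h := ((kernelPoly s N).derivative.hasDerivAt (Real.cos t)).comp t (Real.hasDerivAt_cos t)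
  exact ((Real.hasDerivAt_sin t).mul h).neg.deriv.trans (by simp; ring)

/-! ### Rotations -/

lemma IsSO3.inv_eq {x : Mat3} (hx : IsSO3 x) : x⁻¹ = x.transpose := Matrix.inv_eq_left_inv hx.1

lemma IsSO3.mul_transpose {x : Mat3} (hx : IsSO3 x) : x * x.transpose = 1 :=
  mul_eq_one_comm.1 hx.1

lemma IsSO3.inv {x : Mat3} (hx : IsSO3 x) : IsSO3 x⁻¹ := by
  rw [hx.inv_eq]
  exact ⟨by rw [Matrix.transpose_transpose, hx.mul_transpose], by rw [Matrix.det_transpose, hx.2]⟩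

lemma IsSO3.mul {x y : Mat3} (hx : IsSO3 x) (hy : IsSO3 y) : IsSO3 (x * y) := by
  refine ⟨?_, by rw [Matrix.det_mul, hx.2, hy.2, one_mul]⟩
  rw [Matrix.transpose_mul, Matrix.mul_assoc, ← Matrix.mul_assoc x.transpose, hx.1,
    Matrix.one_mul, hy.1]

lemma Lgen_transpose (i : Fin 3) : (Lgen i).transpose = -Lgen i := by
  ext a b
  fin_cases i <;> fin_cases a <;> fin_cases b <;> simp [Lgen]

lemma exp_smul_Lgen_transpose_mul (i : Fin 3) (t : ℝ) :
    (NormedSpace.exp (t • Lgen i)).transpose * NormedSpace.exp (t • Lgen i) = 1 := by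
  rw [← Matrix.exp_transpose, Matrix.transpose_smul, Lgen_transpose, smul_neg,
    ← Matrix.exp_add_of_commute _ _ (Commute.refl (t • Lgen i)).neg_left, neg_add_cancel,
    NormedSpace.exp_zero]

lemma isSO3_exp (i : Fin 3) (t : ℝ) : IsSO3 (NormedSpace.exp (t • Lgen i)) := by
  refine ⟨exp_smul_Lgen_transpose_mul i t, ?_⟩
  have h : NormedSpace.exp (t • Lgen i) =
      NormedSpace.exp ((t / 2) • Lgen i) * NormedSpace.exp ((t / 2) • Lgen i) := by
    rw [← Matrix.exp_add_of_commute _ _ (Commute.refl _), ← add_smul, add_halves]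
  have h2 := congrArg Matrix.det (exp_smul_Lgen_transpose_mul i (t / 2))
  rw [Matrix.det_mul, Matrix.det_transpose, Matrix.det_one] at h2
  rw [h, Matrix.det_mul, h2]

open scoped Matrix.Norms.Operator in
lemma hasDerivAt_trace_mul_exp (A L : Mat3) (t : ℝ) :
    HasDerivAt (fun u : ℝ => Matrix.trace (A * NormedSpace.exp (u • L)))
      (Matrix.trace (A * (NormedSpace.exp (t • L) * L))) t := by
  have h := hasDerivAt_exp_smul_const L t (𝕂 := ℝ)
  let φ : Mat3 →ₗ[ℝ] ℝ := (Matrix.traceLinearMap (Fin 3) ℝ ℝ).comp (LinearMap.mulLeft ℝ A)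
  exact (LinearMap.toContinuousLinearMap φ).hasFDerivAt.comp_hasDerivAt t h

/-- The cosine of the rotation angle. -/
noncomputable def rotCos (r : Mat3) : ℝ := (Matrix.trace r - 1) / 2

/-- The components of the rotation axis, scaled by the sine of the rotation angle. -/
noncomputable def rotAxial (r : Mat3) (n : Fin 3) : ℝ := -Matrix.trace (Lgen n * r) / 2

lemma rotAxial_zero (r : Mat3) : rotAxial r 0 = (r 2 1 - r 1 2) / 2 := by
  simp only [rotAxial, Matrix.trace, Matrix.diag_apply, Matrix.mul_apply, Fin.sum_univ_three]
  simp [Lgen]; ring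

lemma rotAxial_one (r : Mat3) : rotAxial r 1 = (r 0 2 - r 2 0) / 2 := by
  simp only [rotAxial, Matrix.trace, Matrix.diag_apply, Matrix.mul_apply, Fin.sum_univ_three]
  simp [Lgen]; ring

lemma rotAxial_two (r : Mat3) : rotAxial r 2 = (r 1 0 - r 0 1) / 2 := by
  simp only [rotAxial, Matrix.trace, Matrix.diag_apply, Matrix.mul_apply, Fin.sum_univ_three]
  simp [Lgen]; ring

lemma IsSO3.adjugate_eq {r : Mat3} (h : IsSO3 r) : r.adjugate = r.transpose := by
  rw [← h.inv_eq, Matrix.inv_def, h.2]; simp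

lemma IsSO3.rotAxial_mul {r : Mat3} (h : IsSO3 r) (i n : Fin 3) :
    rotAxial r i * rotAxial r n = (1 + rotCos r) *
      ((r i n + r n i) / 2 - if i = n then rotCos r else 0) := by
  have h1 := h.1
  have h2 := h.mul_transpose
  have h3 := h.adjugate_eq
  rw [Matrix.adjugate_fin_three] at h3
  simp only [← Matrix.ext_iff, Fin.forall_fin_succ, Matrix.mul_apply, Fin.sum_univ_three,
    Matrix.transpose_apply, Matrix.one_apply] at h1 h2 h3
  simp at h1 h2 h3
  have hc : rotCos r = (r 0 0 + r 1 1 + r 2 2 - 1) / 2 := by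
    simp [rotCos, Matrix.trace, Fin.sum_univ_three]
  fin_cases i <;> fin_cases n <;>
  simp [rotAxial_zero, rotAxial_one, rotAxial_two, hc] <;> clear hc <;> grind

lemma IsSO3.sum_rotAxial_sq {r : Mat3} (h : IsSO3 r) :
    rotAxial r 0 ^ 2 + rotAxial r 1 ^ 2 + rotAxial r 2 ^ 2 = 1 - rotCos r ^ 2 := by
  have h0 := h.rotAxial_mul 0 0
  have h1 := h.rotAxial_mul 1 1
  have h2 := h.rotAxial_mul 2 2
  have hc : r 0 0 + r 1 1 + r 2 2 = 2 * rotCos r + 1 := by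
    simp [rotCos, Matrix.trace, Fin.sum_univ_three]; ring
  simp only [if_true] at h0 h1 h2
  linear_combination h0 + h1 + h2 + (1 + rotCos r) * hc

lemma IsSO3.abs_rotCos_le {r : Mat3} (h : IsSO3 r) : |rotCos r| ≤ 1 := by
  have := h.sum_rotAxial_sq
  rw [← sq_le_one_iff_abs_le_one]
  nlinarith [sq_nonneg (rotAxial r 0), sq_nonneg (rotAxial r 1), sq_nonneg (rotAxial r 2)]

lemma IsSO3.rotAxial_sq_le {r : Mat3} (h : IsSO3 r) (n : Fin 3) :
    rotAxial r n ^ 2 ≤ 1 - rotCos r ^ 2 := by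
  rw [← h.sum_rotAxial_sq]
  fin_cases n <;> simp <;> nlinarith [sq_nonneg (rotAxial r 0), sq_nonneg (rotAxial r 1),
    sq_nonneg (rotAxial r 2)]

lemma IsSO3.two_mul_abs_rotAxial_mul_le {r : Mat3} (h : IsSO3 r) {i n : Fin 3} (hin : i ≠ n) :
    2 * |rotAxial r i * rotAxial r n| ≤ 1 - rotCos r ^ 2 := by
  have h1 : rotAxial r i ^ 2 + rotAxial r n ^ 2 ≤ 1 - rotCos r ^ 2 := by
    rw [← h.sum_rotAxial_sq]
    fin_cases i <;> fin_cases n <;> simp at hin ⊢ <;> nlinarith [sq_nonneg (rotAxial r 0),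
      sq_nonneg (rotAxial r 1), sq_nonneg (rotAxial r 2)]
  have h2 := two_mul_le_add_sq |rotAxial r i| |rotAxial r n|
  rw [sq_abs, sq_abs, mul_assoc, ← abs_mul] at h2
  exact h2.trans h1

lemma IsSO3.abs_sub_div_two_sq_le {r : Mat3} (h : IsSO3 r) (i n : Fin 3) :
    ((r i n - r n i) / 2) ^ 2 ≤ 1 - rotCos r ^ 2 := by
  have h0 := h.rotAxial_sq_le 0
  have h1 := h.rotAxial_sq_le 1
  have h2 := h.rotAxial_sq_le 2
  have h3 := (sq_nonneg (rotAxial r 0)).trans h0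
  rw [rotAxial_zero] at h0
  rw [rotAxial_one] at h1
  rw [rotAxial_two] at h2
  fin_cases i <;> fin_cases n <;> simp only [Fin.zero_eta, Fin.mk_one, Fin.reduceFinMk] <;> linarith

lemma IsSO3.abs_apply_le {r : Mat3} (h : IsSO3 r) (i n : Fin 3) : |r i n| ≤ 1 := by
  have h1 := congrFun (congrFun h.mul_transpose i) i
  simp only [Matrix.mul_apply, Fin.sum_univ_three, Matrix.transpose_apply,
    Matrix.one_apply_eq] at h1
  rw [← sq_le_one_iff_abs_le_one]
  fin_cases n <;> simp only [Fin.zero_eta, Fin.mk_one, Fin.reduceFinMk] <;>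
  nlinarith [mul_self_nonneg (r i 0), mul_self_nonneg (r i 1),
    mul_self_nonneg (r i 2)]

lemma trace_Lgen_mul_mul_Lgen (r : Mat3) (n i : Fin 3) :
    Matrix.trace (Lgen n * r * Lgen i) = r i n - if i = n then 2 * rotCos r + 1 else 0 := by
  simp only [rotCos, Matrix.trace, Matrix.diag_apply, Matrix.mul_apply, Fin.sum_univ_three]
  fin_cases i <;> fin_cases n <;> simp [Lgen] <;> ring

lemma rotAxial_eq_neg_trace_mul_Lgen (r : Mat3) (i : Fin 3) :
    rotAxial r i = -Matrix.trace (r * Lgen i) / 2 := by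
  rw [rotAxial, Matrix.trace_mul_comm]

/-! ### Derivatives of the zonal kernel -/

lemma IsSO3.cos_rotAngle {r : Mat3} (h : IsSO3 r) : Real.cos (rotAngle r) = rotCos r :=
  Real.cos_arccos (abs_le.1 h.abs_rotCos_le).1 (abs_le.1 h.abs_rotCos_le).2

lemma sigmaK_eq {x y : Mat3} (hx : IsSO3 x) (hy : IsSO3 y) (s N : ℕ) :
    sigmaK s N x y = (kernelPoly s N).eval (rotCos (y⁻¹ * x)) := by
  rw [sigmaK, sigmaT_eq_eval_cos, (hy.inv.mul hx).cos_rotAngle]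

lemma hasDerivAt_rotCos_mul_exp (r : Mat3) (i : Fin 3) :
    HasDerivAt (fun u : ℝ => rotCos (r * NormedSpace.exp (u • Lgen i))) (-rotAxial r i) 0 := by
  have h := ((hasDerivAt_trace_mul_exp r (Lgen i) 0).sub_const 1).div_const 2
  refine h.congr_deriv ?_
  rw [zero_smul, NormedSpace.exp_zero, Matrix.one_mul, rotAxial_eq_neg_trace_mul_Lgen]
  ring

lemma hasDerivAt_rotAxial_mul_exp (r : Mat3) (n i : Fin 3) :
    HasDerivAt (fun u : ℝ => rotAxial (r * NormedSpace.exp (u • Lgen i)) n)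
      (-Matrix.trace (Lgen n * r * Lgen i) / 2) 0 := by
  have h := (hasDerivAt_trace_mul_exp (Lgen n * r) (Lgen i) 0).neg.div_const 2
  rw [zero_smul, NormedSpace.exp_zero, Matrix.one_mul] at h
  simp only [rotAxial, ← Matrix.mul_assoc]
  exact h

lemma hasDerivAt_rotCos_exp_neg_mul (r : Mat3) (n : Fin 3) :
    HasDerivAt (fun u : ℝ => rotCos ((NormedSpace.exp (u • Lgen n))⁻¹ * r)) (rotAxial r n) 0 := by
  have h := hasDerivAt_trace_mul_exp r (Lgen n) (-0)
  have h2 := ((h.scomp (0 : ℝ) (hasDerivAt_neg (0 : ℝ))).sub_const 1).div_const 2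
  rw [neg_zero, zero_smul, NormedSpace.exp_zero, Matrix.one_mul] at h2
  have hfun : (fun u : ℝ => rotCos ((NormedSpace.exp (u • Lgen n))⁻¹ * r)) =
      fun u : ℝ => (Matrix.trace (r * NormedSpace.exp ((-u) • Lgen n)) - 1) / 2 := by
    ext u
    rw [rotCos, Matrix.trace_mul_comm, neg_smul, Matrix.exp_neg]
  rw [hfun]
  refine h2.congr_deriv ?_
  rw [rotAxial_eq_neg_trace_mul_Lgen, smul_eq_mul]
  ring

lemma Xy_sigmaK_eq {x y : Mat3} (hx : IsSO3 x) (hy : IsSO3 y) (s N : ℕ) (n : Fin 3) :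
    Xy n (sigmaK s N) x y = (kernelPoly s N).derivative.eval (rotCos (y⁻¹ * x)) *
      rotAxial (y⁻¹ * x) n := by
  have hfun : (fun t : ℝ => sigmaK s N x (y * NormedSpace.exp (t • Lgen n))) = fun t : ℝ =>
      (kernelPoly s N).eval (rotCos ((NormedSpace.exp (t • Lgen n))⁻¹ * (y⁻¹ * x))) := by
    ext t
    rw [sigmaK_eq hx (hy.mul (isSO3_exp n t)), Matrix.mul_inv_rev, Matrix.mul_assoc]
  have h := ((kernelPoly s N).hasDerivAt (rotCos ((NormedSpace.exp ((0 : ℝ) • Lgen n))⁻¹ *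
    (y⁻¹ * x)))).comp (0 : ℝ) (hasDerivAt_rotCos_exp_neg_mul (y⁻¹ * x) n)
  rw [Xy, hfun]
  refine h.deriv.trans ?_
  rw [zero_smul, NormedSpace.exp_zero, inv_one, Matrix.one_mul]

lemma Xx_Xy_sigmaK_eq {x y : Mat3} (hx : IsSO3 x) (hy : IsSO3 y) (s N : ℕ) (i n : Fin 3) :
    Xx i (Xy n (sigmaK s N)) x y =
      -((kernelPoly s N).derivative.derivative.eval (rotCos (y⁻¹ * x)) *
        (rotAxial (y⁻¹ * x) i * rotAxial (y⁻¹ * x) n)) -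
      (kernelPoly s N).derivative.eval (rotCos (y⁻¹ * x)) *
        (((y⁻¹ * x) i n - if i = n then 2 * rotCos (y⁻¹ * x) + 1 else 0) / 2) := by
  have hfun : (fun t : ℝ => Xy n (sigmaK s N) (x * NormedSpace.exp (t • Lgen i)) y) =
      fun t : ℝ => (kernelPoly s N).derivative.eval
        (rotCos (y⁻¹ * x * NormedSpace.exp (t • Lgen i))) *
          rotAxial (y⁻¹ * x * NormedSpace.exp (t • Lgen i)) n := by
    ext t
    rw [Xy_sigmaK_eq (hx.mul (isSO3_exp i t)) hy, ← Matrix.mul_assoc]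
  have h := (((kernelPoly s N).derivative.hasDerivAt (rotCos (y⁻¹ * x *
    NormedSpace.exp ((0 : ℝ) • Lgen i)))).comp (0 : ℝ)
      (hasDerivAt_rotCos_mul_exp (y⁻¹ * x) i)).mul (hasDerivAt_rotAxial_mul_exp (y⁻¹ * x) n i)
  rw [Xx, hfun]
  refine h.deriv.trans ?_
  rw [trace_Lgen_mul_mul_Lgen]
  simp only [zero_smul, NormedSpace.exp_zero, Matrix.mul_one, Function.comp_apply]
  ring

lemma one_add_cos_mul_le {θ : ℝ} (h0 : 0 < θ) (hπ : θ < π) :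
    (1 + Real.cos θ) * θ ≤ 2 * Real.sin θ := by
  have hc : 0 < Real.cos (θ / 2) := Real.cos_pos_of_mem_Ioo ⟨by linarith, by linarith⟩
  have ht := Real.le_tan (x := θ / 2) (by linarith) (by linarith)
  rw [Real.tan_eq_sin_div_cos, le_div_iff₀ hc] at ht
  have h1 : Real.cos θ = 2 * Real.cos (θ / 2) ^ 2 - 1 := by
    rw [← Real.cos_two_mul]; ring_nf
  have h2 : Real.sin θ = 2 * Real.sin (θ / 2) * Real.cos (θ / 2) := by
    rw [← Real.sin_two_mul]; ring_nf
  rw [h1, h2]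
  nlinarith [mul_le_mul_of_nonneg_left ht hc.le]

/-- The bound on the mixed second derivative away from the half turns, with `A` and `B` the values
at `cos θ` of the first two derivatives of the polynomial representing the kernel. -/
lemma abs_mixed_derivative_le {r : Mat3} (hr : IsSO3 r) {S A B P : ℝ} (hS : 0 < S)
    (hS2 : S ^ 2 = 1 - rotCos r ^ 2) (h1 : |S * A| ≤ 2 * P)
    (hH : |A * (1 + rotCos r)| ≤ 3 * P) (h2 : |S ^ 2 * B - rotCos r * A| ≤ 4 * P) (i n : Fin 3) :
    |-(B * (rotAxial r i * rotAxial r n)) -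
      A * ((r i n - if i = n then 2 * rotCos r + 1 else 0) / 2)| ≤ 4 * P := by
  set c := rotCos r with hc
  have hP : 0 ≤ P := by linarith [abs_nonneg (S * A)]
  have hc1 : 0 < 1 + c := by
    have := (abs_le.1 hr.abs_rotCos_le).1
    nlinarith
  obtain ⟨q, hq⟩ : ∃ q, rotAxial r i * rotAxial r n = S ^ 2 * q :=
    ⟨rotAxial r i * rotAxial r n / S ^ 2, by field_simp⟩
  have hmul := hr.rotAxial_mul i n
  have hsym : (r i n + r n i) / 2 - (if i = n then c else 0) = (1 - c) * q := by
    refine mul_left_cancel₀ hc1.ne' ?_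
    rw [← hmul, hq, hS2]
    ring
  by_cases hin : i = n
  · subst hin
    simp only [if_true] at hsym ⊢
    have hq0 : 0 ≤ q := by
      have : 0 ≤ S ^ 2 * q := hq ▸ mul_self_nonneg _
      exact nonneg_of_mul_nonneg_right this (by positivity)
    have hq1 : q ≤ 1 := by
      have h := hr.rotAxial_sq_le i
      rw [sq, hq, ← hc, ← hS2] at h
      exact le_of_mul_le_mul_left (by linarith) (by positivity : 0 < S ^ 2)
    have key : -(B * (rotAxial r i * rotAxial r i)) - A * ((r i i - (2 * c + 1)) / 2) =
        -(q * (S ^ 2 * B - c * A)) + (1 - q) * (A * (1 + c) / 2) := by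
      rw [hq]
      linear_combination (-A / 2) * hsym
    rw [key]
    refine (abs_add_le _ _).trans ?_
    rw [abs_neg, abs_mul, abs_mul, abs_of_nonneg hq0, abs_of_nonneg (sub_nonneg.2 hq1),
      abs_div, abs_two]
    nlinarith [mul_le_mul_of_nonneg_left h2 hq0,
      mul_le_mul_of_nonneg_left hH (sub_nonneg.2 hq1), mul_nonneg (sub_nonneg.2 hq1) hP]
  · simp only [if_neg hin, sub_zero] at hsym ⊢
    have hq1 : |q| ≤ 1 / 2 := by
      have h := hr.two_mul_abs_rotAxial_mul_le hin
      rw [hq, ← hc, ← hS2, abs_mul, abs_of_pos (by positivity : 0 < S ^ 2)] at h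
      exact le_of_mul_le_mul_left (by linarith) (by positivity : 0 < S ^ 2)
    have hw : |A * ((r i n - r n i) / 2)| ≤ 2 * P := by
      have h := hr.abs_sub_div_two_sq_le i n
      rw [← hc, ← hS2] at h
      have h' := abs_le_of_sq_le_sq h hS.le
      refine le_trans ?_ h1
      rw [abs_mul, abs_mul, abs_of_pos hS, mul_comm]
      gcongr
    have key : -(B * (rotAxial r i * rotAxial r n)) - A * (r i n / 2) =
        -(q * ((S ^ 2 * B - c * A) + A * (1 + c) / 2)) - A * ((r i n - r n i) / 2) / 2 := by
      rw [hq]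
      linear_combination (-A / 2) * hsym
    rw [key]
    have hsum : |(S ^ 2 * B - c * A) + A * (1 + c) / 2| ≤ 4 * P + 3 * P / 2 := by
      refine (abs_add_le _ _).trans (add_le_add h2 ?_)
      rw [abs_div, abs_two]
      linarith
    refine (abs_sub _ _).trans ?_
    rw [abs_neg, abs_mul, abs_div, abs_two]
    have := mul_le_mul hq1 hsum (abs_nonneg _) (by norm_num)
    linarith

/-- The bound on the mixed second derivative at a half turn. -/
lemma abs_mixed_derivative_le_of_rotCos_eq {r : Mat3} (hr : IsSO3 r) (hc : rotCos r = -1)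
    (A B : ℝ) (i n : Fin 3) :
    |-(B * (rotAxial r i * rotAxial r n)) -
      A * ((r i n - if i = n then 2 * rotCos r + 1 else 0) / 2)| ≤ |A| := by
  have hmul := hr.rotAxial_mul i n
  rw [hc, add_neg_cancel, zero_mul] at hmul
  have hr1 := abs_le.1 (hr.abs_apply_le i n)
  rw [hmul, hc, mul_zero, neg_zero, zero_sub, abs_neg, abs_mul]
  refine mul_le_of_le_one_right (abs_nonneg A) (abs_le.2 ?_)
  split_ifs <;> constructor <;> linarith [hr1.1, hr1.2]

theorem localized_first_and_second_derivative_kernel_bounds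
    (s N : ℕ) (hs_even : Even s) (hs : 6 ≤ s) (hN : 2 * s ≤ N)
    (x y : Mat3) (hx : IsSO3 x) (hy : IsSO3 y)
    (hsep : π / (2 * ((N : ℝ) + 1)) ≤ rotAngle (y⁻¹ * x)) (n i : Fin 3) :
    |Xy n (sigmaK s N) x y| ≤
        cConst 1 s / (((N : ℝ) + 1) ^ (s - 1) * rotAngle (y⁻¹ * x) ^ s) ∧
    |Xx i (Xy n (sigmaK s N)) x y| ≤
        cConst 2 s / (((N : ℝ) + 1) ^ (s - 2) * rotAngle (y⁻¹ * x) ^ s) := by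
  have hr : IsSO3 (y⁻¹ * x) := hy.inv.mul hx
  rw [Xx_Xy_sigmaK_eq hx hy, Xy_sigmaK_eq hx hy]
  generalize y⁻¹ * x = r at hr hsep ⊢
  have hcos := hr.cos_rotAngle
  have hM : (1 : ℝ) ≤ (N : ℝ) + 1 := by linarith [(Nat.cast_nonneg N : (0 : ℝ) ≤ N)]
  have hM0 : (0 : ℝ) < (N : ℝ) + 1 := by linarith
  have hθ : 0 < rotAngle r := lt_of_lt_of_le (by positivity) hsep
  have hθπ : rotAngle r ≤ π := Real.arccos_le_pi _
  have hD := kernelDecay_nonneg s N hθ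
  have hd1 := abs_deriv_sigmaT_le hs hs_even hN hθ hθπ
  have hd2 := abs_deriv_deriv_sigmaT_le hs hs_even hN hθ hθπ
  rw [deriv_sigmaT_eq, hcos, abs_neg] at hd1
  rw [deriv_deriv_sigmaT_eq, hcos] at hd2
  have hD' : kernelDecay s N (rotAngle r) =
      1.02 * (s - 1).factorial * 2 ^ s * s / (((N : ℝ) + 1) * rotAngle r) ^ s := rfl
  have hsin0 := Real.sin_nonneg_of_nonneg_of_le_pi hθ.le hθπ
  have hsin : Real.sin (rotAngle r) ^ 2 = 1 - rotCos r ^ 2 := by rw [← hcos, Real.sin_sq]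
  generalize kernelDecay s N (rotAngle r) = D at hD hd1 hd2 hD'
  generalize (kernelPoly s N).derivative.derivative.eval (rotCos r) = B at hd2 ⊢
  generalize (kernelPoly s N).derivative.eval (rotCos r) = A at hd1 hd2 ⊢
  constructor
  · have hax : |rotAxial r n| ≤ Real.sin (rotAngle r) :=
      abs_le_of_sq_le_sq (hsin ▸ hr.rotAxial_sq_le n) hsin0
    have hc : cConst 1 s / (((N : ℝ) + 1) ^ (s - 1) * rotAngle r ^ s) =
        2 * (((N : ℝ) + 1) * D) := by
      rw [hD', mul_pow, cConst, ← Nat.sub_add_cancel (by omega : 1 ≤ s), pow_succ ((N : ℝ) + 1),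
        Nat.add_sub_cancel]
      field_simp
    rw [hc]
    refine le_trans ?_ hd1
    rw [abs_mul, abs_mul, abs_of_nonneg hsin0, mul_comm]
    gcongr
  · have hc : 4 * (((N : ℝ) + 1) ^ 2 * D) ≤
        cConst 2 s / (((N : ℝ) + 1) ^ (s - 2) * rotAngle r ^ s) := by
      have h : 4 * (((N : ℝ) + 1) ^ 2 * D) = 1.02 * (s - 1).factorial * 2 ^ s * (4 * s) /
          (((N : ℝ) + 1) ^ (s - 2) * rotAngle r ^ s) := by
        have hpow : ((N : ℝ) + 1) ^ s = ((N : ℝ) + 1) ^ (s - 2) * ((N : ℝ) + 1) ^ 2 := by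
          rw [← pow_add, Nat.sub_add_cancel (by omega)]
        rw [hD', mul_pow, hpow]
        field_simp
      rw [h, cConst]
      gcongr
      linarith
    refine le_trans ?_ hc
    rcases hθπ.lt_or_eq with hlt | heq
    · have hS := Real.sin_pos_of_pos_of_lt_pi hθ hlt
      refine abs_mixed_derivative_le hr hS hsin ?_ ?_ hd2 i n
      · refine hd1.trans ?_
        gcongr
        exact le_self_pow₀ hM two_ne_zero
      · have h1 := one_add_cos_mul_le hθ hlt
        rw [hcos] at h1
        have hc0 : 0 ≤ 1 + rotCos r := by linarith [(abs_le.1 hr.abs_rotCos_le).1]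
        rw [abs_mul, abs_of_pos hS] at hd1
        rw [abs_mul, abs_of_nonneg hc0]
        rw [div_le_iff₀ (by positivity)] at hsep
        have h2 : |A| * (1 + rotCos r) * rotAngle r ≤ 4 * (((N : ℝ) + 1) * D) := by
          nlinarith [mul_le_mul_of_nonneg_left h1 (abs_nonneg A)]
        have h3 : |A| * (1 + rotCos r) * 3 ≤
            |A| * (1 + rotCos r) * (rotAngle r * (2 * ((N : ℝ) + 1))) := by
          gcongr
          linarith [Real.pi_gt_three]
        nlinarith [mul_le_mul_of_nonneg_right h2 hM0.le, mul_nonneg (sq_nonneg ((N : ℝ) + 1)) hD]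
    · have hc1 : rotCos r = -1 := by rw [← hcos, heq, Real.cos_pi]
      refine (abs_mixed_derivative_le_of_rotCos_eq hr hc1 A B i n).trans ?_
      simpa [heq, hc1] using hd2
end
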